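/- arXiv:1305.7473 — 4 statements merged into one kernel-verified Lean document; each statement's English description precedes it below -/
import Mathlib

section
/- There exists a finite simple graph G such that every orientation G⃗ of G satisfies ψ_d(G⃗) < ψ(G); that is, ψ_{d,max}(G), defined as the maximum of ψ_d(G⃗) over all orientations G⃗ of G, is strictly smaller than ψ(G). -/
open Classical

/-- The underlying undirected simple graph of a digraph given by an arc relation `D`. -/
def underlying {V : Type*} (D : V → V → Prop) : SimpleGraph V := SimpleGraph.fromRel D

/-- `D` is an orientation of the simple graph `G`: every arc of `D` lies on an edge of `G`,
and every edge of `G` carries exactly one of its two possible orientations as an arc. -/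
def IsOrientation {V : Type*} (G : SimpleGraph V) (D : V → V → Prop) : Prop :=
  (∀ u v, D u v → G.Adj u v) ∧ (∀ u v, G.Adj u v → (D u v ↔ ¬ D v u))

/-- The local chromatic number `ψ(G)`: the minimum over proper colorings `c` of
`max_v |{c(u) : u ∈ N(v)}| + 1`. -/
noncomputable def localChrom {V : Type*} [Fintype V] (G : SimpleGraph V) : ℕ :=
  sInf {n | ∃ c : V → ℕ, (∀ u v, G.Adj u v → c u ≠ c v) ∧
    n = Finset.univ.sup (fun v => (c '' {u | G.Adj v u}).ncard) + 1}

/-- The directed local chromatic number `ψ_d(D)`: the minimum over proper colorings of the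
underlying graph of `max_v |{c(u) : u ∈ N₊(v)}| + 1`. -/
noncomputable def dirLocalChrom {V : Type*} [Fintype V] (D : V → V → Prop) : ℕ :=
  sInf {n | ∃ c : V → ℕ, (∀ u v, (underlying D).Adj u v → c u ≠ c v) ∧
    n = Finset.univ.sup (fun v => (c '' {u | D v u}).ncard) + 1}

/-! Let `X = U(5, 3)` be the universal graph of local 3-colorings with 5 colors, and let `a`, `b` be
vertices of `X` such that the color of `a` is not allowed next to `b`, while that of `b` is allowed
next to `a`. Join `(a, b)` to `(b, a)` in the tensor square of `X` and call the result `G`.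

Every local 3-coloring of `X × X` factors through a projection: this holds on each product of two
triangles, and spreads by connectivity. A local 3-coloring of `G` would therefore give one of `X`
plus the edge `ab`. There is none, since up to renaming colors the canonical coloring is the only
local 3-coloring of `X`: for fixed `x`, the colors of the vertices `(x, {p, q})` form an edge
coloring of `K₄` in which two equal adjacent edges span a monochromatic triangle and some two of any
three edges at a vertex are equal, so that `K₄` is monochromatic. Hence `ψ(G) > 3`.

In an orientation of `G` the extra edge has only one direction, so one of the two projections maps
all arcs to arcs of `X` plus the single arc from `a` to `b`, where the canonical coloring is still
local. Hence `ψ_d ≤ 3`.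
-/

/-- A proper coloring `c` of the (di)graph with adjacency or arc relation `R` in which at most `k`
colors occur among the (out-)neighbors of each vertex. Such colorings witness `ψ ≤ k + 1` for
graphs and `ψ_d ≤ k + 1` for digraphs. -/
structure IsLocalColoring {V β : Type*} (R : V → V → Prop) (k : ℕ) (c : V → β) : Prop where
  ne : ∀ {u v}, R u v → c u ≠ c v
  encard_le : ∀ v, (c '' {u | R v u}).encard ≤ k

namespace IsLocalColoring

variable {V W β γ : Type*} {R : V → V → Prop} {S : W → W → Prop} {k : ℕ}

lemma comp {c : V → β} (hc : IsLocalColoring R k c) (φ : S →r R) : IsLocalColoring S k (c ∘ φ) where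
  ne h := hc.ne (φ.map_rel h)
  encard_le w := by
    refine (Set.encard_le_encard ?_).trans (hc.encard_le (φ w))
    rintro _ ⟨u, hu, rfl⟩
    exact ⟨φ u, φ.map_rel hu, rfl⟩

lemma of_comp {c : V → β} {φ : W → V} (hc : IsLocalColoring S k (c ∘ φ))
    (hφ : ∀ v, ∃ w, φ w = v ∧ ∀ u, R v u → ∃ w', φ w' = u ∧ S w w') : IsLocalColoring R k c where
  ne {v u} h := by
    obtain ⟨w, rfl, hw⟩ := hφ v
    obtain ⟨w', rfl, h'⟩ := hw u h
    exact hc.ne h'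
  encard_le v := by
    obtain ⟨w, rfl, hw⟩ := hφ v
    refine (Set.encard_le_encard ?_).trans (hc.encard_le w)
    rintro _ ⟨u, hu, rfl⟩
    obtain ⟨w', rfl, h'⟩ := hw u hu
    exact ⟨w', h', rfl⟩

lemma comp_injective {c : V → β} (hc : IsLocalColoring R k c) {f : β → γ}
    (hf : f.Injective) : IsLocalColoring R k (f ∘ c) where
  ne h := hf.ne (hc.ne h)
  encard_le v := by rw [Set.image_comp, hf.encard_image]; exact hc.encard_le v

lemma eq_or_eq {c : V → β} (hc : IsLocalColoring R 2 c) {v x y z : V} (hx : R v x) (hy : R v y)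
    (hz : R v z) (hxy : c x ≠ c y) : c z = c x ∨ c z = c y := by
  by_contra! ⟨hzx, hzy⟩
  have hsub : {c z, c x, c y} ⊆ c '' {u | R v u} := by
    rintro _ (rfl | rfl | rfl)
    exacts [⟨z, hz, rfl⟩, ⟨x, hx, rfl⟩, ⟨y, hy, rfl⟩]
  have hcard : ({c z, c x, c y} : Set β).encard = 3 :=
    Set.encard_eq_three.2 ⟨_, _, _, hzx, hzy, hxy, rfl⟩
  have := (Set.encard_le_encard hsub).trans (hc.encard_le v)
  rw [hcard] at this
  exact absurd this (by decide)

end IsLocalColoring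

section LocalChromaticNumber

variable {V β : Type*} [Fintype V] {k : ℕ}

lemma dirLocalChrom_le {D : V → V → Prop} [Countable β] {c : V → β}
    (hc : IsLocalColoring D k c) : dirLocalChrom D ≤ k + 1 := by
  obtain ⟨f, hf⟩ := exists_injective_nat β
  have hfc := hc.comp_injective hf
  have hproper : ∀ u v, (underlying D).Adj u v → (f ∘ c) u ≠ (f ∘ c) v := by
    rintro u v ⟨-, h | h⟩
    exacts [hfc.ne h, (hfc.ne h).symm]
  calc dirLocalChrom D
      ≤ Finset.univ.sup (fun v ↦ (f ∘ c '' {u | D v u}).ncard) + 1 :=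
        Nat.sInf_le ⟨f ∘ c, hproper, rfl⟩
    _ ≤ k + 1 := by
        gcongr
        exact Finset.sup_le fun v _ ↦ ENat.toNat_le_of_le_natCast (hfc.encard_le v)

lemma lt_localChrom {G : SimpleGraph V} (h : ∀ c : V → ℕ, ¬ IsLocalColoring G.Adj k c) :
    k + 1 < localChrom G := by
  obtain ⟨f, hf⟩ := exists_injective_nat V
  obtain ⟨c, hproper, hn⟩ := Nat.sInf_mem
    (s := {n | ∃ c : V → ℕ, (∀ u v, G.Adj u v → c u ≠ c v) ∧
      n = Finset.univ.sup (fun v => (c '' {u | G.Adj v u}).ncard) + 1})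
    ⟨_, f, fun u v huv ↦ hf.ne huv.ne, rfl⟩
  change localChrom G = _ at hn
  by_contra! hle
  refine h c ⟨fun huv ↦ hproper _ _ huv, fun v ↦ ?_⟩
  rw [← (Set.toFinite _).cast_ncard_eq, Nat.cast_le]
  have : (c '' {u | G.Adj v u}).ncard ≤ _ :=
    Finset.le_sup (f := fun v ↦ (c '' {u | G.Adj v u}).ncard) (Finset.mem_univ v)
  omega

end LocalChromaticNumber

/-- The tensor (categorical) product of two graphs, in which `(v, w)` is adjacent to `(v', w')` when
both coordinates are adjacent. -/
def tensorProd {V W : Type*} (X : SimpleGraph V) (Y : SimpleGraph W) : SimpleGraph (V × W) where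
  Adj p q := X.Adj p.1 q.1 ∧ Y.Adj p.2 q.2
  symm := ⟨fun _ _ h ↦ ⟨h.1.symm, h.2.symm⟩⟩
  loopless := ⟨fun _ h ↦ h.1.ne rfl⟩

/-- A triangle of a graph with labelled vertices, encoded as a homomorphism from `K₃`. -/
abbrev Triangle {V : Type*} (X : SimpleGraph V) : Type _ := (⊤ : SimpleGraph (Fin 3)) →g X

section Projections

variable {V W β : Type*} {X : SimpleGraph V} {Y : SimpleGraph W} {c : V × W → β}

lemma Triangle.adj (t : Triangle X) {i j : Fin 3} (hij : i ≠ j) : X.Adj (t i) (t j) :=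
  t.map_adj hij

namespace IsLocalColoring

lemma comp_swap_tensorProd {k : ℕ} (hc : IsLocalColoring (tensorProd X Y).Adj k c) :
    IsLocalColoring (tensorProd Y X).Adj k fun p ↦ c (p.2, p.1) :=
  hc.comp (⟨Prod.swap, And.symm⟩ : (tensorProd Y X).Adj →r (tensorProd X Y).Adj)

lemma rows_eq_or_columns_eq_of_ne (hc : IsLocalColoring (tensorProd X Y).Adj 2 c) (s : Triangle X)
    (t : Triangle Y) {i i' j j' : Fin 3} (hi : i ≠ i') (hj : j ≠ j') :
    (c (s i, t j) = c (s i, t j') ∧ c (s i', t j) = c (s i', t j')) ∨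
      (c (s i, t j) = c (s i', t j) ∧ c (s i, t j') = c (s i', t j')) := by
  obtain ⟨k, hki, hki'⟩ : ∃ k, k ≠ i ∧ k ≠ i' := by revert i i'; decide
  obtain ⟨l, hlj, hlj'⟩ : ∃ l, l ≠ j ∧ l ≠ j' := by revert j j'; decide
  have hadj {p q r u : Fin 3} (hp : p ≠ r) (hq : q ≠ u) :
      (tensorProd X Y).Adj (s p, t q) (s r, t u) := ⟨s.adj hp, t.adj hq⟩
  have hdiag : c (s i, t j) ≠ c (s i', t j') := hc.ne (hadj hi hj)
  have hantidiag : c (s i, t j') ≠ c (s i', t j) := hc.ne (hadj hi hj.symm)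
  have h₁ := hc.eq_or_eq (hadj hki hlj) (hadj hki' hlj') (hadj hki hlj') hdiag
  have h₂ := hc.eq_or_eq (hadj hki hlj) (hadj hki' hlj') (hadj hki' hlj) hdiag
  grind

lemma triangles_rows_eq_or_columns_eq (hc : IsLocalColoring (tensorProd X Y).Adj 2 c)
    (s : Triangle X) (t : Triangle Y) : (∀ i j j', c (s i, t j) = c (s i, t j')) ∨
      ∀ i i' j, c (s i, t j) = c (s i', t j) := by
  by_contra! ⟨⟨i₀, j₀, j₁, hne⟩, i, i', j, hne'⟩
  have hcol k : c (s k, t j₀) = c (s i₀, t j₀) := by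
    have := hc.rows_eq_or_columns_eq_of_ne s t (i := i₀) (i' := k) (j := j₀) (j' := j₁)
    grind
  have := hc.rows_eq_or_columns_eq_of_ne s t (i := i) (i' := i') (j := j₀) (j' := j)
  grind

lemma eq_of_adj_of_triangle_ne (hc : IsLocalColoring (tensorProd X Y).Adj 2 c)
    (hX : ∀ x, ∃ s : Triangle X, s 0 = x) (t : Triangle Y) {x y : V} (hxy : X.Adj x y)
    {j₀ j₁ : Fin 3} (hne : c (x, t j₀) ≠ c (x, t j₁)) (j : Fin 3) :
    c (y, t j) = c (x, t j) := by
  obtain ⟨s, rfl⟩ := hX x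
  have hs : X.Adj (s 0) (s 1) := s.adj (by decide)
  have hcol i j : c (s i, t j) = c (s 0, t j) := by
    rcases hc.triangles_rows_eq_or_columns_eq s t with h | h
    exacts [absurd (h 0 j₀ j₁) hne, h _ _ _]
  have hinj {i j} (hij : i ≠ j) : c (s 0, t i) ≠ c (s 0, t j) := by
    rw [← hcol 1 j]
    exact hc.ne ⟨hs, t.adj hij⟩
  obtain ⟨i, k, hij, hik, hkj⟩ : ∃ i k, i ≠ j ∧ i ≠ k ∧ k ≠ j := by decide +revert
  -- `(s 0, t i)` sees exactly the colors of the two other vertices `(s 0, t j)`, `(s 0, t k)`.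
  have hmem {i k} (hij : i ≠ j) (hik : i ≠ k) (hkj : k ≠ j) :
      c (y, t j) = c (s 0, t j) ∨ c (y, t j) = c (s 0, t k) := by
    have := hc.eq_or_eq (v := (s 0, t i)) (x := (s 1, t j)) (y := (s 1, t k)) (z := (y, t j))
      ⟨hs, t.adj hij⟩ ⟨hs, t.adj hik⟩ ⟨hxy, t.adj hij⟩
    rw [hcol 1 j, hcol 1 k] at this
    exact this (hinj hkj.symm)
  have := hmem hij hik hkj
  have := hmem hkj hik.symm hij
  have := hinj hik
  grind

lemma triangle_rows_eq_or_columns_eq (hc : IsLocalColoring (tensorProd X Y).Adj 2 c)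
    (hX : ∀ x, ∃ s : Triangle X, s 0 = x) (hXc : X.Preconnected) (t : Triangle Y) :
    (∀ x j j', c (x, t j) = c (x, t j')) ∨ ∀ x y j, c (x, t j) = c (y, t j) := by
  by_contra! ⟨⟨x₀, j₀, j₁, hne⟩, x, y, j, hne'⟩
  have hcol z : ∀ j, c (z, t j) = c (x₀, t j) := by
    induction (SimpleGraph.reachable_iff_reflTransGen x₀ z).1 (hXc x₀ z) with
    | refl => exact fun _ ↦ rfl
    | tail _ hadj ih =>
      refine fun j ↦ (hc.eq_of_adj_of_triangle_ne hX t hadj (j₀ := j₀) (j₁ := j₁) ?_ j).trans (ih j)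
      rwa [ih, ih]
  exact hne' ((hcol x j).trans (hcol y j).symm)

theorem factorsThrough_fst_or_snd (hc : IsLocalColoring (tensorProd X Y).Adj 2 c)
    (hX : ∀ x, ∃ s : Triangle X, s 0 = x) (hXc : X.Preconnected)
    (hY : ∀ y, ∃ t : Triangle Y, t 0 = y) (hYc : Y.Preconnected) :
    c.FactorsThrough Prod.fst ∨ c.FactorsThrough Prod.snd := by
  by_cases hcol : ∀ (t : Triangle Y) x y j, c (x, t j) = c (y, t j)
  · right
    rintro ⟨x, q⟩ ⟨y, _⟩ rfl
    obtain ⟨t, rfl⟩ := hY q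
    exact hcol t x y 0
  · left
    push Not at hcol
    obtain ⟨t, x₀, y₀, j₀, hne⟩ := hcol
    have hrow x j j' : c (x, t j) = c (x, t j') :=
      ((hc.triangle_rows_eq_or_columns_eq hX hXc t).resolve_right fun h ↦ hne (h _ _ _)) x j j'
    rintro ⟨x, q⟩ ⟨_, r⟩ rfl
    obtain ⟨s, rfl⟩ := hX x
    rcases hc.comp_swap_tensorProd.triangle_rows_eq_or_columns_eq hY hYc s with h | h
    · have hdiag : c (s 0, t 0) = c (s 1, t 1) := (h (t 0) 0 1).trans (hrow (s 1) 0 1)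
      exact absurd hdiag (hc.ne ⟨s.adj (by decide), t.adj (by decide)⟩)
    · exact h q r 0

end IsLocalColoring

end Projections

section TwistedSquare

variable {V β : Type*} {X : SimpleGraph V} {a b : V}

/-- The tensor square of `X` with the extra edge joining `(a, b)` to `(b, a)`. Both projections map
the extra edge to the pair `{a, b}`, in opposite directions. -/
def twistedSquare (X : SimpleGraph V) (a b : V) : SimpleGraph (V × V) :=
  tensorProd X X ⊔ SimpleGraph.edge (a, b) (b, a)

/-- The digraph obtained from `X` by replacing each edge by two opposite arcs and adding the arc
from `a` to `b`. -/
def addArc (X : SimpleGraph V) (a b : V) (x y : V) : Prop :=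
  X.Adj x y ∨ (x = a ∧ y = b)

lemma twistedSquare_adj {p q : V × V} : (twistedSquare X a b).Adj p q ↔
    (X.Adj p.1 q.1 ∧ X.Adj p.2 q.2) ∨
      (p = (a, b) ∧ q = (b, a) ∨ p = (b, a) ∧ q = (a, b)) ∧ p ≠ q := by
  simp only [twistedSquare, SimpleGraph.sup_adj, SimpleGraph.edge_adj, tensorProd]

lemma IsOrientation.nonempty_relHom_addArc {D : V × V → V × V → Prop}
    (hD : IsOrientation (twistedSquare X a b) D) : Nonempty (D →r addArc X a b) := by
  by_cases hab : D (a, b) (b, a)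
  · refine ⟨Prod.fst, fun {p q} hpq ↦ ?_⟩
    rcases twistedSquare_adj.1 (hD.1 p q hpq) with h | ⟨⟨rfl, rfl⟩ | ⟨rfl, rfl⟩, -⟩
    · exact .inl h.1
    · exact .inr ⟨rfl, rfl⟩
    · exact absurd hpq ((hD.2 _ _ (hD.1 _ _ hab)).1 hab)
  · refine ⟨Prod.snd, fun {p q} hpq ↦ ?_⟩
    rcases twistedSquare_adj.1 (hD.1 p q hpq) with h | ⟨⟨rfl, rfl⟩ | ⟨rfl, rfl⟩, -⟩
    · exact .inl h.2
    · exact absurd hpq hab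
    · exact .inr ⟨rfl, rfl⟩

namespace IsLocalColoring

lemma of_twistedSquare {c : V × V → β} {k : ℕ}
    (hc : IsLocalColoring (twistedSquare X a b).Adj k c)
    (hX : ∀ x, ∃ y, X.Adj x y) (hfst : c.FactorsThrough Prod.fst) :
    IsLocalColoring (X ⊔ SimpleGraph.edge a b).Adj k fun x ↦ c (x, x) := by
  have hfactor : (fun x ↦ c (x, x)) ∘ Prod.fst = c := funext fun _ ↦ hfst rfl
  refine of_comp (S := (twistedSquare X a b).Adj) (φ := Prod.fst) (by rwa [hfactor]) fun x ↦ ?_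
  -- For `x = a` and `x = b` this lifts `x` to an end of the extra edge.
  let y : V := if x = a then b else a
  refine ⟨(x, y), rfl, fun u hu ↦ ?_⟩
  rcases hu with hu | hu
  · obtain ⟨z, hz⟩ := hX y
    exact ⟨(u, z), rfl, twistedSquare_adj.2 (.inl ⟨hu, hz⟩)⟩
  · obtain ⟨h, hne⟩ := (SimpleGraph.edge_adj _ _ _ _).1 hu
    exact ⟨(u, x), rfl, twistedSquare_adj.2 (.inr (by grind))⟩

lemma comp_swap_twistedSquare {c : V × V → β} {k : ℕ}
    (hc : IsLocalColoring (twistedSquare X a b).Adj k c) :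
    IsLocalColoring (twistedSquare X a b).Adj k (c ∘ Prod.swap) :=
  hc.comp (⟨Prod.swap, fun {p q} h ↦ by
    rw [twistedSquare_adj] at h ⊢
    grind⟩ : (twistedSquare X a b).Adj →r (twistedSquare X a b).Adj)

lemma exists_of_twistedSquare {c : V × V → β}
    (hc : IsLocalColoring (twistedSquare X a b).Adj 2 c)
    (hX : ∀ x, ∃ s : Triangle X, s 0 = x) (hXc : X.Preconnected) :
    ∃ g : V → β, IsLocalColoring (X ⊔ SimpleGraph.edge a b).Adj 2 g := by
  have hnbr x : ∃ y, X.Adj x y := by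
    obtain ⟨s, rfl⟩ := hX x
    exact ⟨s 1, s.adj (by decide)⟩
  have hsq : IsLocalColoring (tensorProd X X).Adj 2 c :=
    hc.comp (⟨id, .inl⟩ : (tensorProd X X).Adj →r (twistedSquare X a b).Adj)
  rcases hsq.factorsThrough_fst_or_snd hX hXc hX hXc with hfst | hsnd
  · exact ⟨_, hc.of_twistedSquare hnbr hfst⟩
  · exact ⟨_, hc.comp_swap_twistedSquare.of_twistedSquare hnbr fun _ _ h ↦ hsnd h⟩

end IsLocalColoring

end TwistedSquare

lemma IsOrientation.comap {V W : Type*} {G : SimpleGraph V} {H : SimpleGraph W}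
    {D : W → W → Prop} (hD : IsOrientation H D) (e : G ≃g H) :
    IsOrientation G fun u v ↦ D (e u) (e v) :=
  ⟨fun _ _ h ↦ e.map_adj_iff.1 (hD.1 _ _ h), fun _ _ h ↦ hD.2 _ _ (e.map_adj_iff.2 h)⟩

theorem exists_fin_dirLocalChrom_lt_localChrom {V β : Type*} [Finite V] [Countable β] {k : ℕ}
    {G : SimpleGraph V}
    (hD : ∀ D, IsOrientation G D → ∃ c : V → β, IsLocalColoring D k c)
    (hG : ∀ c : V → ℕ, ¬ IsLocalColoring G.Adj k c) :
    ∃ (n : ℕ) (G' : SimpleGraph (Fin n)),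
      ∀ D : Fin n → Fin n → Prop, IsOrientation G' D → dirLocalChrom D < localChrom G' := by
  have := Fintype.ofFinite V
  let e := G.overFinIso rfl
  refine ⟨_, G.overFin rfl, fun D hD' ↦ ?_⟩
  obtain ⟨c, hc⟩ := hD _ (hD'.comap e)
  have hc' : IsLocalColoring D k (c ∘ e.symm) :=
    hc.comp ⟨e.symm, fun h ↦ by simpa only [RelIso.apply_symm_apply] using h⟩
  exact (dirLocalChrom_le hc').trans_lt <|
    lt_localChrom fun g hg ↦ hG _ (hg.comp e.toHom)

/-- A vertex of the universal graph `U(m, k + 1)` of Erdős, Füredi, Hajnal, Komjáth, Rödl and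
Seress, where `m` is the number of elements of `α`: a color together with the `k` other colors that
are allowed on the neighbors. -/
@[ext]
structure UniversalVertex (α : Type*) (k : ℕ) where
  color : α
  palette : Finset α
  color_notMem : color ∉ palette
  card_palette : palette.card = k

/-- The universal graph for local colorings: a graph has a local coloring with colors in `α` and at
most `k` colors on each neighborhood exactly when it maps to `universalGraph α k` (for
`k < Fintype.card α`). -/
def universalGraph (α : Type*) (k : ℕ) : SimpleGraph (UniversalVertex α k) where
  Adj v w := v.color ∈ w.palette ∧ w.color ∈ v.palette
  symm := ⟨fun _ _ h ↦ h.symm⟩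
  loopless := ⟨fun v h ↦ v.color_notMem h.1⟩

namespace UniversalVertex

variable {α : Type*} {k : ℕ}

instance [Finite α] : Finite (UniversalVertex α k) :=
  Finite.of_injective (fun v ↦ (v.color, v.palette)) fun _ _ h ↦
    UniversalVertex.ext (congrArg Prod.fst h) (congrArg Prod.snd h)

lemma exists_subset_palette (v : UniversalVertex α k) {x : α} {s : Finset α} (hx : x ∉ s)
    (hs : s.card ≤ k) : ∃ w : UniversalVertex α k, w.color = x ∧ s ⊆ w.palette := by
  let t := insert x s ∪ insert v.color v.palette
  obtain ⟨p, hsp, hpt, hp⟩ := Finset.exists_subsuperset_card_eq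
    (s := s) (t := t.erase x) (n := k) (by grind) hs (by
      have : k + 1 ≤ t.card := by
        rw [← v.card_palette, ← Finset.card_insert_of_notMem v.color_notMem]
        exact Finset.card_le_card Finset.subset_union_right
      have := Finset.pred_card_le_card_erase (s := t) (a := x)
      omega)
  exact ⟨⟨x, p, fun h ↦ Finset.notMem_erase x t (hpt h), hp⟩, rfl, hsp⟩

lemma isLocalColoring_color {v w : UniversalVertex α k} (hvw : w.color ∈ v.palette) :
    IsLocalColoring (addArc (universalGraph α k) v w) k color where
  ne := by
    rintro u u' (h | ⟨rfl, rfl⟩) heq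
    · exact u'.color_notMem (heq ▸ h.1)
    · exact u.color_notMem (heq ▸ hvw)
  encard_le u := by
    have hsub : color '' {u' | addArc (universalGraph α k) v w u u'} ⊆ u.palette := by
      rintro _ ⟨u', h | ⟨rfl, rfl⟩, rfl⟩
      exacts [h.2, hvw]
    simpa only [Set.encard_coe_eq_coe_finsetCard, u.card_palette] using Set.encard_le_encard hsub

lemma exists_triangle (hk : 2 ≤ k) (v : UniversalVertex α k) :
    ∃ s : Triangle (universalGraph α k), s 0 = v := by
  obtain ⟨y, hy, z, hz, hyz⟩ := Finset.one_lt_card.1 (v.card_palette ▸ hk)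
  have hv := v.color_notMem
  obtain ⟨u, rfl, hu⟩ := v.exists_subset_palette (x := y) (s := {v.color, z}) (by grind)
    (Finset.card_le_two.trans hk)
  obtain ⟨w, rfl, hw⟩ := v.exists_subset_palette (x := z) (s := {v.color, u.color}) (by grind)
    (Finset.card_le_two.trans hk)
  have hvu : (universalGraph α k).Adj v u := ⟨hu (by simp), hy⟩
  have hvw : (universalGraph α k).Adj v w := ⟨hw (by simp), hz⟩
  have huw : (universalGraph α k).Adj u w := ⟨hw (by simp), hu (by simp)⟩
  refine ⟨⟨![v, u, w], fun {i j} hij ↦ ?_⟩, rfl⟩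
  fin_cases i <;> fin_cases j <;> simp_all [SimpleGraph.adj_comm]

lemma reachable_of_color_eq (hk : 2 ≤ k) {v w : UniversalVertex α k} (h : v.color = w.color) :
    (universalGraph α k).Reachable v w := by
  obtain ⟨z, hz⟩ : w.palette.Nonempty := Finset.card_pos.1 (by rw [w.card_palette]; omega)
  obtain ⟨y, hy, hyz⟩ := Finset.exists_mem_ne (v.card_palette ▸ hk) z
  have hv := v.color_notMem
  have hw := w.color_notMem
  obtain ⟨u, rfl, hu⟩ := v.exists_subset_palette (x := y) (s := {v.color, z}) (by grind)
    (Finset.card_le_two.trans hk)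
  obtain ⟨u', rfl, hu'⟩ := v.exists_subset_palette (x := z) (s := {v.color, u.color}) (by grind)
    (Finset.card_le_two.trans hk)
  have hvu : (universalGraph α k).Adj v u := ⟨hu (by simp), hy⟩
  have huu' : (universalGraph α k).Adj u u' := ⟨hu' (by simp), hu (by simp)⟩
  have hu'w : (universalGraph α k).Adj u' w := ⟨hz, hu' (by simp [h])⟩
  exact hvu.reachable.trans (huu'.reachable.trans hu'w.reachable)

lemma universalGraph_preconnected (hk : 2 ≤ k) : (universalGraph α k).Preconnected := by
  intro v w
  by_cases h : v.color = w.color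
  · exact reachable_of_color_eq hk h
  have hcard (x : α) : ({x} : Finset α).card ≤ k := by
    rw [Finset.card_singleton]
    omega
  obtain ⟨v', hv', hvp⟩ := v.exists_subset_palette (x := v.color) (s := {w.color})
    (by grind) (hcard _)
  obtain ⟨w', hw', hwp⟩ := v.exists_subset_palette (x := w.color) (s := {v.color})
    (by grind) (hcard _)
  have hadj : (universalGraph α k).Adj v' w' := ⟨hwp (by simp [hv']), hvp (by simp [hw'])⟩
  exact (reachable_of_color_eq hk hv'.symm).trans
    (hadj.reachable.trans (reachable_of_color_eq hk hw'))

end UniversalVertex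

/-- The properties inherited by `c x a b`, the color of the vertex of `U(m, 3)` with color `x` and
palette `{a, b}`, from a local coloring of `U(m, 3)`. For fixed `x`, the values `c x a b` are to be
thought of as an edge coloring of the complete graph on the elements other than `x`. -/
structure IsTripleColoring {α β : Type*} (c : α → α → α → β) : Prop where
  swap : ∀ x a b, c x a b = c x b a
  ne : ∀ {x y a b}, [x, y, a].Nodup → [x, y, b].Nodup → c x y a ≠ c y x b
  -- `(x, {y, a})` is adjacent to `(y, {x, b})` and to the adjacent `(y, {x, a})` and `(a, {x, y})`.
  eq_or_eq : ∀ {x y a b}, [x, y, a, b].Nodup → c y x b = c y x a ∨ c y x b = c a x y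

namespace IsTripleColoring

variable {α β : Type*} {c : α → α → α → β} {x y a b d e : α}

lemma exchange_of_ne (hc : IsTripleColoring c) (hd : [x, y, a, b].Nodup)
    (h : c x y a ≠ c x y b) :
    c x y a = c b x y ∧ c x y b = c a x y ∧ c y x a = c y x b := by
  have ha : c x y a = c b x y := by
    have := hc.eq_or_eq (x := y) (y := x) (a := b) (b := a) (by grind)
    grind [hc.swap]
  have hb : c x y b = c a x y := by
    have := hc.eq_or_eq (x := y) (y := x) (a := a) (b := b) (by grind)
    grind [hc.swap]
  have hne : c x y b ≠ c y x b := hc.ne (by grind) (by grind)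
  have := hc.eq_or_eq (x := x) (y := y) (a := a) (b := b) hd
  exact ⟨ha, hb, by grind⟩

lemma triangle_eq_of_eq (hc : IsTripleColoring c) (hd : [x, a, b, d].Nodup)
    (h : c x a b = c x a d) : c x a b = c x b d := by
  by_contra hne
  have hba : c x b a = c d x b :=
    (hc.exchange_of_ne (y := b) (a := a) (b := d) (by grind) (by grind [hc.swap])).1
  have hdx : c d x a = c d x b :=
    (hc.exchange_of_ne (y := d) (a := a) (b := b) (by grind) (by grind [hc.swap])).2.2
  refine hc.ne (x := x) (y := d) (a := a) (b := a) (by grind) (by grind) ?_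
  calc c x d a = c x a d := hc.swap x d a
    _ = c x b a := by rw [← h, hc.swap]
    _ = c d x a := hba.trans hdx.symm

lemma star_eq_or_eq_or_eq (hc : IsTripleColoring c) (hd : [x, a, b, d, e].Nodup) :
    c x a b = c x a d ∨ c x a b = c x a e ∨ c x a d = c x a e := by
  by_contra! ⟨hbd, hbe, hde⟩
  have hb : c x a b = c e x a :=
    (hc.exchange_of_ne (y := a) (a := e) (b := b) (by grind) hbe.symm).2.1
  have hd' : c x a d = c e x a :=
    (hc.exchange_of_ne (y := a) (a := e) (b := d) (by grind) hde.symm).2.1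
  exact hbd (hb.trans hd'.symm)

lemma star_eq_of_eq (hc : IsTripleColoring c) (hd : [x, a, b, d, e].Nodup)
    (h : c x a b = c x a d) : c x a b = c x a e := by
  have hbd : c x a b = c x b d := hc.triangle_eq_of_eq (by grind) h
  rw [hc.swap x a e]
  rcases hc.star_eq_or_eq_or_eq (x := x) (a := e) (b := a) (d := b) (e := d) (by grind) with
    hab | had | hbd'
  · exact (hc.triangle_eq_of_eq (by grind) hab).symm
  · exact h.trans (hc.triangle_eq_of_eq (by grind) had).symm
  · have heb : c x b e = c x b a := by
      rw [hc.swap x b e, hc.triangle_eq_of_eq (by grind) hbd', ← hbd, hc.swap]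
    rw [hc.swap x a b, ← heb, hc.triangle_eq_of_eq (by grind) heb]

lemma star_eq_of_nodup (hc : IsTripleColoring c) (hd : [x, a, b, d, e].Nodup) :
    c x a b = c x a d := by
  rcases hc.star_eq_or_eq_or_eq hd with h | h | h
  · exact h
  · exact hc.star_eq_of_eq (by grind) h
  · exact (hc.star_eq_of_eq (by grind) h).symm

theorem eq_of_nodup [Fintype α] (hα : 5 ≤ Fintype.card α)
    (hc : IsTripleColoring c) (hab : [x, a, b].Nodup) (hde : [x, d, e].Nodup) :
    c x a b = c x d e := by
  have hfan {p q r : α} (hpq : [x, p, q].Nodup) (hpr : [x, p, r].Nodup) :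
      c x p q = c x p r := by
    by_cases hqr : q = r
    · rw [hqr]
    obtain ⟨s, -, hs⟩ := Finset.exists_mem_notMem_of_card_lt_card (s := {x, p, q, r})
      (t := Finset.univ) (Finset.card_le_four.trans_lt hα)
    exact hc.star_eq_of_nodup (e := s) (by grind)
  by_cases had : a = d
  · exact had ▸ hfan hab (had ▸ hde)
  · rw [hfan hab (r := d) (by grind), hc.swap, hfan (r := e) (by grind) hde]

end IsTripleColoring

section Rigidity

variable {α β : Type*} {g : UniversalVertex α 2 → β}

/-- The color that `g` gives to the vertex of color `x` and palette `{a, b}`, as a set so that it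
makes sense (and is empty) also when `x`, `a`, `b` are not distinct. -/
def tripleColor (g : UniversalVertex α 2 → β) (x a b : α) : Set β :=
  g '' {v | v.color = x ∧ v.palette = {a, b}}

lemma exists_tripleColor_eq (g : UniversalVertex α 2 → β) {x a b : α} (h : [x, a, b].Nodup) :
    ∃ v : UniversalVertex α 2, v.color = x ∧ v.palette = {a, b} ∧ tripleColor g x a b = {g v} := by
  refine ⟨⟨x, {a, b}, by grind, Finset.card_pair (by grind)⟩, rfl, rfl, ?_⟩
  rw [tripleColor, ← Set.image_singleton]
  congr 1
  ext v
  simp only [Set.mem_ofPred_eq, Set.mem_singleton_iff, UniversalVertex.ext_iff]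

lemma IsLocalColoring.isTripleColoring (hg : IsLocalColoring (universalGraph α 2).Adj 2 g) :
    IsTripleColoring (tripleColor g) where
  swap x a b := by rw [tripleColor, tripleColor, Finset.pair_comm]
  ne {x y a b} hxya hxyb := by
    obtain ⟨v, hv, hvp, hgv⟩ := exists_tripleColor_eq g (x := x) (a := y) (b := a) (by grind)
    obtain ⟨w, hw, hwp, hgw⟩ := exists_tripleColor_eq g (x := y) (a := x) (b := b) (by grind)
    rw [hgv, hgw]
    exact Set.singleton_injective.ne (hg.ne ⟨by simp [hv, hwp], by simp [hw, hvp]⟩)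
  eq_or_eq {x y a b} hd := by
    obtain ⟨v, hv, hvp, -⟩ := exists_tripleColor_eq g (x := x) (a := y) (b := a) (by grind)
    obtain ⟨u, hu, hup, hgu⟩ := exists_tripleColor_eq g (x := y) (a := x) (b := b) (by grind)
    obtain ⟨w, hw, hwp, hgw⟩ := exists_tripleColor_eq g (x := y) (a := x) (b := a) (by grind)
    obtain ⟨z, hz, hzp, hgz⟩ := exists_tripleColor_eq g (x := a) (a := x) (b := y) (by grind)
    rw [hgu, hgw, hgz, Set.singleton_eq_singleton_iff, Set.singleton_eq_singleton_iff]
    exact hg.eq_or_eq (v := v) ⟨by simp [hv, hwp], by simp [hw, hvp]⟩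
      ⟨by simp [hv, hzp], by simp [hz, hvp]⟩ ⟨by simp [hv, hup], by simp [hu, hvp]⟩
      (hg.ne ⟨by simp [hw, hzp], by simp [hz, hwp]⟩)

theorem IsLocalColoring.eq_iff_color_eq [Fintype α] (hα : 5 ≤ Fintype.card α)
    (hg : IsLocalColoring (universalGraph α 2).Adj 2 g) {v w : UniversalVertex α 2} :
    g v = g w ↔ v.color = w.color := by
  have heq {v w : UniversalVertex α 2} (h : v.color = w.color) : g v = g w := by
    obtain ⟨a, b, hab, hv⟩ := Finset.card_eq_two.1 v.card_palette
    obtain ⟨d, e, hde, hw⟩ := Finset.card_eq_two.1 w.card_palette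
    have hvc := v.color_notMem
    have hwc := w.color_notMem
    have hab' : [v.color, a, b].Nodup := by grind
    have hde' : [v.color, d, e].Nodup := by grind
    obtain ⟨v', hv', hvp, hgv⟩ := exists_tripleColor_eq g hab'
    obtain ⟨w', hw', hwp, hgw⟩ := exists_tripleColor_eq g hde'
    obtain rfl : v' = v := UniversalVertex.ext hv' (hvp.trans hv.symm)
    obtain rfl : w' = w := UniversalVertex.ext (hw'.trans h) (hwp.trans hw.symm)
    rw [← Set.singleton_eq_singleton_iff, ← hgv, ← hgw]
    exact hg.isTripleColoring.eq_of_nodup hα hab' hde'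
  refine ⟨fun hgvw ↦ by_contra fun hne ↦ ?_, heq⟩
  obtain ⟨v', hv', hvp⟩ := v.exists_subset_palette (x := v.color) (s := {w.color})
    (by grind) (by simp)
  obtain ⟨w', hw', hwp⟩ := v.exists_subset_palette (x := w.color) (s := {v.color})
    (by grind) (by simp)
  refine hg.ne (u := v') (v := w') ⟨hwp (by simp [hv']), hvp (by simp [hw'])⟩ ?_
  rw [heq hv', heq hw', hgvw]

theorem not_isLocalColoring_universalGraph_sup_edge [Fintype α] (hα : 5 ≤ Fintype.card α)
    {v w : UniversalVertex α 2} (hvw : v.color ≠ w.color) (hvp : v.color ∉ w.palette) :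
    ¬ IsLocalColoring (universalGraph α 2 ⊔ SimpleGraph.edge v w).Adj 2 g := by
  intro hg
  have hU : IsLocalColoring (universalGraph α 2).Adj 2 g :=
    hg.comp (⟨id, .inl⟩ :
      (universalGraph α 2).Adj →r (universalGraph α 2 ⊔ SimpleGraph.edge v w).Adj)
  obtain ⟨a, b, hab, hw⟩ := Finset.card_eq_two.1 w.card_palette
  have hwc := w.color_notMem
  obtain ⟨u, rfl, hu⟩ := w.exists_subset_palette (x := a) (s := {w.color}) (by grind) (by simp)
  obtain ⟨z, rfl, hz⟩ := w.exists_subset_palette (x := b) (s := {w.color}) (by grind) (by simp)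
  have hwv : (SimpleGraph.edge v w).Adj w v := (SimpleGraph.edge_adj _ _ _ _).2 (by grind)
  have := hg.eq_or_eq (v := w) (x := u) (y := z) (z := v)
    (.inl ⟨hu (by simp), by simp [hw]⟩) (.inl ⟨hz (by simp), by simp [hw]⟩) (.inr hwv)
  simp only [ne_eq, hU.eq_iff_color_eq hα] at this
  grind

end Rigidity

/-- There is a finite simple graph all of whose orientations have directed local chromatic
number strictly smaller than the local chromatic number of the graph. -/
theorem stmt0 : ∃ (n : ℕ) (G : SimpleGraph (Fin n)),
    ∀ D : Fin n → Fin n → Prop, IsOrientation G D → dirLocalChrom D < localChrom G := by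
  let v : UniversalVertex (Fin 5) 2 := ⟨0, {1, 2}, by decide, by decide⟩
  let w : UniversalVertex (Fin 5) 2 := ⟨1, {2, 3}, by decide, by decide⟩
  refine exists_fin_dirLocalChrom_lt_localChrom (β := Fin 5) (k := 2)
    (G := twistedSquare (universalGraph (Fin 5) 2) v w) (fun D hD ↦ ?_) fun c hc ↦ ?_
  · obtain ⟨φ⟩ := hD.nonempty_relHom_addArc
    have hcolor : w.color ∈ v.palette := by decide
    exact ⟨_, (UniversalVertex.isLocalColoring_color hcolor).comp φ⟩
  · obtain ⟨g, hg⟩ := hc.exists_of_twistedSquare (UniversalVertex.exists_triangle le_rfl)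
      (UniversalVertex.universalGraph_preconnected le_rfl)
    have hne : v.color ≠ w.color := by decide
    have hnotMem : v.color ∉ w.palette := by decide
    exact not_isLocalColoring_universalGraph_sup_edge (by simp) hne hnotMem hg
end

section
/- For every finite simple graph G and every vertex v₀ ∈ V(G) there exists an independent set A₀ of G containing v₀ with the following property: for every fractional coloring (x_A)_{A ∈ S(G)} of G there is a vertex v ∈ A₀ such that ∑_{A ∈ S(G) : N(v) ∩ A ≠ ∅} x_A ≥ χ*(G) − 1. -/
open Classical

/-- `A` is an independent set of the simple graph `G`. -/
def IsIndepF {V : Type*} (G : SimpleGraph V) (A : Finset V) : Prop :=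
  ∀ u ∈ A, ∀ v ∈ A, ¬ G.Adj u v

/-- A fractional coloring of `G`: nonnegative weights on the independent sets of `G` such
that the sets containing any fixed vertex have total weight at least `1`. -/
structure FracColoring {V : Type*} [Fintype V] (G : SimpleGraph V) where
  x : Finset V → ℝ
  nonneg : ∀ A, 0 ≤ x A
  supp : ∀ A, x A ≠ 0 → IsIndepF G A
  cover : ∀ v : V, 1 ≤ ∑ A : Finset V, if v ∈ A then x A else 0

/-- The total weight of a fractional coloring. -/
noncomputable def totalWeight {V : Type*} [Fintype V] {G : SimpleGraph V}
    (f : FracColoring G) : ℝ :=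
  ∑ A : Finset V, f.x A

/-- The fractional chromatic number `χ*(G)`: the minimum total weight of a fractional
coloring of `G`. -/
noncomputable def fracChrom {V : Type*} [Fintype V] (G : SimpleGraph V) : ℝ :=
  sInf {w : ℝ | ∃ f : FracColoring G, w = totalWeight f}

/-- The local weight of a fractional coloring of a digraph `D`:
`1` plus the maximum over vertices `v` of the total weight of the independent sets meeting
the out-neighborhood of `v`. -/
noncomputable def localWeight {V : Type*} [Fintype V] (D : V → V → Prop)
    (f : FracColoring (underlying D)) : ℝ :=
  1 + ⨆ v : V, ∑ A : Finset V, if ∃ u ∈ A, D v u then f.x A else 0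

/-- The fractional directed local chromatic number `ψ_d*(D)`: the minimum local weight of a
fractional coloring of `D`. -/
noncomputable def fracDirLocal {V : Type*} [Fintype V] (D : V → V → Prop) : ℝ :=
  sInf {w : ℝ | ∃ f : FracColoring (underlying D), w = localWeight D f}

/-!
Let `x` be an optimal fractional coloring and let `A₀` be any color class of `x` that contains `v₀`
and has positive weight. Given a fractional coloring `f` of total weight `W`, add to each of its
color classes all the vertices of `A₀` without a neighbor in it. The total weight is unchanged, and
if `v ∈ A₀` sees weight `s` in `f`, then it is now covered with weight at least `W - s`. By a
perturbation of `x` that lowers the weight of `A₀`, complementary slackness in disguise, no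
fractional coloring of total weight `W` covers all of `A₀` with weight more than `W - χ* + 1`, so
some `v ∈ A₀` has `s ≥ χ* - 1`.
-/

section Independent

variable {V : Type*} {G : SimpleGraph V} {A B : Finset V}

theorem isIndepF_singleton (G : SimpleGraph V) (v : V) : IsIndepF G {v} := by
  simp [IsIndepF]

/-- The greedy extension of `A` by `B`: add to `A` every vertex of `B` that has no neighbor in `A`.
It enlarges the color classes of a fractional coloring by vertices of a fixed independent set. -/
noncomputable def greedyExtension (G : SimpleGraph V) (B A : Finset V) : Finset V :=
  A ∪ {v ∈ B | ¬∃ u ∈ A, G.Adj v u}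

theorem mem_greedyExtension {v : V} :
    v ∈ greedyExtension G B A ↔ v ∈ A ∨ v ∈ B ∧ ¬∃ u ∈ A, G.Adj v u := by
  simp only [greedyExtension, Finset.mem_union, Finset.mem_filter]

theorem subset_greedyExtension (G : SimpleGraph V) (B A : Finset V) :
    A ⊆ greedyExtension G B A :=
  Finset.subset_union_left

theorem IsIndepF.greedyExtension (hB : IsIndepF G B) (hA : IsIndepF G A) :
    IsIndepF G (greedyExtension G B A) := by
  intro u hu v hv huv
  rcases mem_greedyExtension.1 hu with huA | ⟨huB, hu_free⟩ <;>
    rcases mem_greedyExtension.1 hv with hvA | ⟨hvB, hv_free⟩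
  · exact hA u huA v hvA huv
  · exact hv_free ⟨u, huA, huv.symm⟩
  · exact hu_free ⟨v, hvA, huv⟩
  · exact hB u huB v hvB huv

end Independent

section Weights

variable {V ι κ : Type*} [Fintype V] [Fintype ι]

/-- The coverage of `v` by weights on vertex sets: the total weight of the sets containing `v`,
as a linear functional of the weights. -/
noncomputable def coverage (v : V) : (Finset V → ℝ) →ₗ[ℝ] ℝ :=
  ∑ A with v ∈ A, LinearMap.proj A

theorem coverage_apply (v : V) (w : Finset V → ℝ) :
    coverage v w = ∑ A : Finset V, if v ∈ A then w A else 0 := by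
  rw [coverage, LinearMap.sum_apply, Finset.sum_filter]
  rfl

theorem coverage_single (v : V) (A : Finset V) (c : ℝ) :
    coverage v (Pi.single A c) = if v ∈ A then c else 0 := by
  rw [coverage_apply, Fintype.sum_eq_single A fun B hB => ?_, Pi.single_eq_same]
  rw [Pi.single_eq_of_ne hB, ite_self]

/-- The weight seen by `v`: the total weight of the vertex sets that meet the neighborhood
of `v` in `G`. -/
noncomputable def neighborWeight (G : SimpleGraph V) (w : Finset V → ℝ) (v : V) : ℝ :=
  ∑ A : Finset V, if ∃ u ∈ A, G.Adj v u then w A else 0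

/-- The pushforward of the weights `w` along `φ`: every element of `κ` receives the total weight
of its fiber. It carries the weights of color classes over to modified color classes, where
classes with the same image are merged. -/
noncomputable def pushWeight [DecidableEq κ] (φ : ι → κ) (w : ι → ℝ) : κ → ℝ :=
  fun j => ∑ i with φ i = j, w i

theorem sum_pushWeight [Fintype κ] [DecidableEq κ] (φ : ι → κ) (w : ι → ℝ) :
    ∑ j, pushWeight φ w j = ∑ i, w i :=
  Finset.sum_fiberwise _ φ w

theorem coverage_pushWeight (φ : ι → Finset V) (w : ι → ℝ) (v : V) :
    coverage v (pushWeight φ w) = ∑ i, if v ∈ φ i then w i else 0 := by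
  rw [coverage_apply, ← Finset.sum_fiberwise _ φ fun i => if v ∈ φ i then w i else 0]
  refine Finset.sum_congr rfl fun B _ => ?_
  calc (if v ∈ B then pushWeight φ w B else 0)
      = ∑ i with φ i = B, if v ∈ B then w i else 0 := by
        split_ifs
        · rfl
        · exact Finset.sum_const_zero.symm
    _ = ∑ i with φ i = B, if v ∈ φ i then w i else 0 :=
        Finset.sum_congr rfl fun i hi => by rw [(Finset.mem_filter.1 hi).2]

theorem sum_sub_neighborWeight_le_coverage_pushWeight (G : SimpleGraph V)
    {w : Finset V → ℝ} {B : Finset V} {v : V} (hw : ∀ A, 0 ≤ w A) (hv : v ∈ B) :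
    ∑ A, w A - neighborWeight G w v ≤ coverage v (pushWeight (greedyExtension G B) w) := by
  rw [coverage_pushWeight, neighborWeight, ← Finset.sum_sub_distrib]
  gcongr with A
  by_cases hvA : ∃ u ∈ A, G.Adj v u
  · rw [if_pos hvA, sub_self]
    exact ite_nonneg (hw A) le_rfl
  · rw [if_neg hvA, if_pos (mem_greedyExtension.2 (.inr ⟨hv, hvA⟩)), sub_zero]

end Weights

section FoldColoring

variable {V : Type*} [Fintype V] {G : SimpleGraph V} {k : ℝ} {w : Finset V → ℝ}

/-- `w` is a fractional `k`-fold coloring of `G`: nonnegative weights on the independent sets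
that cover every vertex with weight at least `k`. For `k = 1` these are the weights of a
`FracColoring`; a general `k` allows combining colorings without normalizing. -/
structure IsFoldColoring (G : SimpleGraph V) (k : ℝ) (w : Finset V → ℝ) : Prop where
  nonneg : ∀ A, 0 ≤ w A
  supp : ∀ A, w A ≠ 0 → IsIndepF G A
  le_coverage : ∀ v, k ≤ coverage v w

theorem isFoldColoring_one_iff : IsFoldColoring G 1 w ↔ ∃ f : FracColoring G, f.x = w := by
  constructor
  · exact fun hw => ⟨⟨w, hw.nonneg, hw.supp, fun v => coverage_apply v w ▸ hw.le_coverage v⟩, rfl⟩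
  · rintro ⟨f, rfl⟩
    exact ⟨f.nonneg, f.supp, fun v => (coverage_apply v f.x).symm ▸ f.cover v⟩

theorem FracColoring.isFoldColoring (f : FracColoring G) : IsFoldColoring G 1 f.x :=
  isFoldColoring_one_iff.2 ⟨f, rfl⟩

theorem IsFoldColoring.fracChrom_le_sum (hw : IsFoldColoring G 1 w) : fracChrom G ≤ ∑ A, w A := by
  obtain ⟨f, rfl⟩ := isFoldColoring_one_iff.1 hw
  refine csInf_le ⟨0, ?_⟩ ⟨f, rfl⟩
  rintro _ ⟨g, rfl⟩
  exact Finset.sum_nonneg fun A _ => g.nonneg A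

theorem IsFoldColoring.mul_fracChrom_le_sum (hw : IsFoldColoring G k w) (hk : 0 < k) :
    k * fracChrom G ≤ ∑ A, w A := by
  have hnormalized : IsFoldColoring G 1 (k⁻¹ • w) :=
    { nonneg A := mul_nonneg (inv_nonneg.2 hk.le) (hw.nonneg A)
      supp A hA := hw.supp A (right_ne_zero_of_mul hA)
      le_coverage v := by
        rw [map_smul, smul_eq_mul, ← div_eq_inv_mul, one_le_div hk]
        exact hw.le_coverage v }
  have hle := hnormalized.fracChrom_le_sum
  simp only [Pi.smul_apply, smul_eq_mul] at hle
  rwa [← Finset.mul_sum, ← div_eq_inv_mul, le_div_iff₀' hk] at hle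

theorem IsFoldColoring.exists_mem_ne_zero (hw : IsFoldColoring G k w) (hk : 0 < k) (v : V) :
    ∃ A, v ∈ A ∧ w A ≠ 0 := by
  have hcov : coverage v w ≠ 0 := (hk.trans_le (hw.le_coverage v)).ne'
  rw [coverage, LinearMap.sum_apply] at hcov
  obtain ⟨A, hvA, hA⟩ := Finset.exists_ne_zero_of_sum_ne_zero hcov
  exact ⟨A, (Finset.mem_filter.1 hvA).2, hA⟩

theorem IsFoldColoring.pushWeight {φ : Finset V → Finset V} (hw : IsFoldColoring G k w)
    (hφ : ∀ A, IsIndepF G A → IsIndepF G (φ A)) (hsub : ∀ A, A ⊆ φ A) :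
    IsFoldColoring G k (pushWeight φ w) where
  nonneg B := Finset.sum_nonneg fun A _ => hw.nonneg A
  supp B hB := by
    obtain ⟨A, hAB, hA⟩ := Finset.exists_ne_zero_of_sum_ne_zero hB
    exact (Finset.mem_filter.1 hAB).2 ▸ hφ A (hw.supp A hA)
  le_coverage v := by
    refine (hw.le_coverage v).trans ?_
    rw [coverage_apply, coverage_pushWeight]
    gcongr with A
    by_cases hvA : v ∈ A
    · rw [if_pos hvA, if_pos (hsub A hvA)]
    · rw [if_neg hvA]
      exact ite_nonneg (hw.nonneg A) le_rfl

end FoldColoring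

theorem norm_le_sum_of_nonneg {ι : Type*} [Fintype ι] {w : ι → ℝ} (hw : ∀ i, 0 ≤ w i) :
    ‖w‖ ≤ ∑ i, w i := by
  refine (pi_norm_le_iff_of_nonneg (Finset.sum_nonneg fun i _ => hw i)).2 fun i => ?_
  rw [Real.norm_of_nonneg (hw i)]
  exact Finset.single_le_sum (fun j _ => hw j) (Finset.mem_univ i)

section Optimal

variable {V : Type*} [Fintype V] {G : SimpleGraph V} {w x : Finset V → ℝ}

theorem isClosed_setOf_isFoldColoring (G : SimpleGraph V) (k : ℝ) :
    IsClosed {w | IsFoldColoring G k w} := by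
  have hset : {w | IsFoldColoring G k w} =
      (⋂ A, {w | 0 ≤ w A}) ∩ (⋂ A, ⋂ _ : ¬IsIndepF G A, {w | w A = 0}) ∩
        ⋂ v, {w | k ≤ coverage v w} := by
    ext w
    simp only [Set.mem_inter_iff, Set.mem_iInter, Set.mem_ofPred_eq]
    exact ⟨fun h => ⟨⟨h.nonneg, fun A => not_imp_comm.1 (h.supp A)⟩, h.le_coverage⟩,
      fun h => ⟨h.1.1, fun A => not_imp_comm.1 (h.1.2 A), h.2⟩⟩
  rw [hset]
  refine ((isClosed_iInter fun A => ?_).inter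
    (isClosed_iInter fun A => isClosed_iInter fun _ => ?_)).inter (isClosed_iInter fun v => ?_)
  · exact isClosed_le continuous_const (continuous_apply A)
  · exact isClosed_eq (continuous_apply A) continuous_const
  · exact isClosed_le continuous_const (coverage v).continuous_of_finiteDimensional

theorem exists_isFoldColoring_one (G : SimpleGraph V) : ∃ w, IsFoldColoring G 1 w := by
  refine ⟨∑ u, Pi.single {u} 1, fun A => ?_, fun A hA => ?_, fun v => ?_⟩
  · rw [Finset.sum_apply]
    refine Finset.sum_nonneg fun u _ => ?_
    exact (Pi.single_nonneg.2 zero_le_one : (0 : Finset V → ℝ) ≤ Pi.single {u} 1) A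
  · rw [Finset.sum_apply] at hA
    obtain ⟨u, -, hu⟩ := Finset.exists_ne_zero_of_sum_ne_zero hA
    obtain rfl : A = {u} := by
      by_contra hne
      exact hu (Pi.single_eq_of_ne hne 1)
    exact isIndepF_singleton G u
  · simp [coverage_single]

theorem exists_isFoldColoring_one_sum_eq_fracChrom (G : SimpleGraph V) :
    ∃ w, IsFoldColoring G 1 w ∧ ∑ A, w A = fracChrom G := by
  obtain ⟨w₀, hw₀⟩ := exists_isFoldColoring_one G
  have hcont : Continuous fun w : Finset V → ℝ => ∑ A, w A := by fun_prop
  obtain ⟨w, hw, hmin⟩ := hcont.continuousOn.exists_isMinOn'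
    (isClosed_setOf_isFoldColoring G 1) hw₀ <| Filter.eventually_inf_principal.2 <|
      (tendsto_norm_cocompact_atTop.eventually_ge_atTop (∑ A, w₀ A)).mono
        fun w hnorm hw => hnorm.trans (norm_le_sum_of_nonneg hw.nonneg)
  obtain ⟨f₀, -⟩ := isFoldColoring_one_iff.1 hw₀
  have hle : ∑ A, w A ≤ fracChrom G := by
    refine le_csInf ⟨_, f₀, rfl⟩ ?_
    rintro _ ⟨f, rfl⟩
    exact hmin f.isFoldColoring
  exact ⟨w, hw, hle.antisymm hw.fracChrom_le_sum⟩

theorem IsFoldColoring.exchange {A₀ : Finset V} {d : ℝ} (hx : IsFoldColoring G 1 x)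
    (hw : IsFoldColoring G 1 w) (hd : 0 ≤ d) (hcov : ∀ v ∈ A₀, 1 + d ≤ coverage v w) :
    IsFoldColoring G (d + x A₀) (d • (x - Pi.single A₀ (x A₀)) + x A₀ • w) where
  nonneg A := by
    have hx_erase : 0 ≤ (x - Pi.single A₀ (x A₀) : Finset V → ℝ) A := by
      obtain rfl | hA := eq_or_ne A A₀
      · simp
      · simp [hA, hx.nonneg A]
    exact add_nonneg (mul_nonneg hd hx_erase) (mul_nonneg (hx.nonneg A₀) (hw.nonneg A))
  supp A hA := by
    by_contra hindep
    have hxA : x A = 0 := not_imp_comm.1 (hx.supp A) hindep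
    have hwA : w A = 0 := not_imp_comm.1 (hw.supp A) hindep
    obtain rfl | hne := eq_or_ne A A₀ <;> simp_all
  le_coverage v := by
    have hxv := mul_le_mul_of_nonneg_left (hx.le_coverage v) hd
    simp only [map_add, map_smul, map_sub, coverage_single, smul_eq_mul]
    split_ifs with hv
    · linarith [mul_le_mul_of_nonneg_left (hcov v hv) (hx.nonneg A₀)]
    · linarith [mul_le_mul_of_nonneg_left (hw.le_coverage v) (hx.nonneg A₀)]

theorem exists_mem_coverage_le {A₀ : Finset V} (hx : IsFoldColoring G 1 x)
    (hopt : ∑ A, x A = fracChrom G) (hA₀ : x A₀ ≠ 0) (hw : IsFoldColoring G 1 w) :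
    ∃ v ∈ A₀, coverage v w ≤ ∑ A, w A - fracChrom G + 1 := by
  by_contra! hcon
  obtain ⟨d, hd, hcov⟩ : ∃ d, ∑ A, w A - fracChrom G < d ∧ ∀ v ∈ A₀, d < coverage v w - 1 := by
    simpa using Order.exists_between_finsets {∑ A, w A - fracChrom G}
      (A₀.image fun v => coverage v w - 1) (by simpa [lt_sub_iff_add_lt] using hcon)
  have hd0 : 0 < d := (sub_nonneg.2 hw.fracChrom_le_sum).trans_lt hd
  have hx0 : 0 < x A₀ := (hx.nonneg A₀).lt_of_ne' hA₀
  have hle : (d + x A₀) * fracChrom G ≤ d * (∑ A, x A - x A₀) + x A₀ * ∑ A, w A := by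
    have hexch := hx.exchange hw hd0.le fun v hv => by linarith [hcov v hv]
    simpa [Finset.sum_add_distrib, ← Finset.mul_sum] using
      hexch.mul_fracChrom_le_sum (add_pos hd0 hx0)
  have hlt : x A₀ * (∑ A, w A - fracChrom G) < x A₀ * d := by gcongr
  rw [hopt] at hle
  linarith

theorem exists_mem_fracChrom_sub_one_le_neighborWeight {A₀ : Finset V}
    (hx : IsFoldColoring G 1 x) (hopt : ∑ A, x A = fracChrom G) (hA₀ : x A₀ ≠ 0)
    (hw : IsFoldColoring G 1 w) : ∃ v ∈ A₀, fracChrom G - 1 ≤ neighborWeight G w v := by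
  have hext := hw.pushWeight (fun _ => (hx.supp A₀ hA₀).greedyExtension)
    (subset_greedyExtension G A₀)
  obtain ⟨v, hv, hcov⟩ := exists_mem_coverage_le hx hopt hA₀ hext
  rw [sum_pushWeight] at hcov
  have hseen := sum_sub_neighborWeight_le_coverage_pushWeight G hw.nonneg hv
  exact ⟨v, hv, by linarith⟩

end Optimal

/-- For every finite simple graph `G` and vertex `v₀` there is an independent set `A₀`
containing `v₀` such that every fractional coloring of `G` has some vertex `v ∈ A₀` that
"sees" total weight at least `χ*(G) - 1`. -/
theorem stmt3 {V : Type} [Fintype V] (G : SimpleGraph V) (v₀ : V) :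
    ∃ A₀ : Finset V, IsIndepF G A₀ ∧ v₀ ∈ A₀ ∧
      ∀ f : FracColoring G, ∃ v ∈ A₀,
        fracChrom G - 1 ≤ ∑ A : Finset V, if ∃ u ∈ A, G.Adj v u then f.x A else 0 := by
  obtain ⟨x, hx, hopt⟩ := exists_isFoldColoring_one_sum_eq_fracChrom G
  obtain ⟨A₀, hv₀, hA₀⟩ := hx.exists_mem_ne_zero one_pos v₀
  exact ⟨A₀, hx.supp A₀ hA₀, hv₀, fun f =>
    exists_mem_fracChrom_sub_one_le_neighborWeight hx hopt hA₀ f.isFoldColoring⟩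
end

section
/- Let G be a finite loopless directed graph with at least one arc and let k = ψ_d*(G), so that k > 1. Then the fractional chromatic number of the underlying undirected graph satisfies χ*(G) ≤ k^k/(k−1)^{k−1}. -/
open Classical

/-!
Fix a fractional coloring `x` and `0 < q < 1`. Put each set `A` independently into a random family
`S` with probability `1 - q ^ x A`, so that a collection of sets of total weight `t` is disjoint
from `S` with probability `q ^ t`. Select the vertices covered by `S` none of whose out-neighbors is
covered by `S`; they form an independent set. As no independent set contains both `v` and an
out-neighbor of `v`, the two conditions for selecting `v` are independent events, and `v` is
selected with probability at least `(1 - q) * q ^ (w - 1)`, where `w` is the local weight of `x`.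
Dividing the distribution of the selected set by this bound gives a fractional coloring.
It remains to take the infimum over `x` and the optimal `q = (k - 1) / k`.
-/

section RandomSubset

variable {α R : Type*} [Fintype α] [DecidableEq α] [CommRing R]

/-- The probability that a random subset of `α` equals `S`, when each `a` is left out independently
with probability `r a`. Note that `r` gives the probabilities of exclusion, not of inclusion. -/
def subsetProb (r : α → R) (S : Finset α) : R :=
  (∏ a ∈ S, (1 - r a)) * ∏ a ∈ Sᶜ, r a

theorem subsetProb_nonneg [PartialOrder R] [IsOrderedRing R] {r : α → R} (hr₀ : ∀ a, 0 ≤ r a)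
    (hr₁ : ∀ a, r a ≤ 1) (S : Finset α) : 0 ≤ subsetProb r S :=
  mul_nonneg (Finset.prod_nonneg fun a _ => sub_nonneg.mpr (hr₁ a))
    (Finset.prod_nonneg fun a _ => hr₀ a)

theorem sum_subsetProb (r : α → R) : ∑ S, subsetProb r S = 1 := by
  simp only [subsetProb, ← Fintype.prod_add, sub_add_cancel, Finset.prod_const_one]

theorem sum_subsetProb_disjoint (r : α → R) (T : Finset α) :
    ∑ S with Disjoint S T, subsetProb r S = ∏ a ∈ T, r a := by
  have subsets_compl : ({S | Disjoint S T} : Finset (Finset α)) = Tᶜ.powerset := by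
    ext S
    simp [Finset.subset_compl_iff_disjoint_right]
  have split_compl (S : Finset α) (hS : S ∈ Tᶜ.powerset) : subsetProb r S =
      (∏ a ∈ T, r a) * ((∏ a ∈ S, (1 - r a)) * ∏ a ∈ Tᶜ \ S, r a) := by
    have hTS : T ⊆ Sᶜ := Finset.subset_compl_comm.mp (Finset.mem_powerset.mp hS)
    have hdiff : Tᶜ \ S = Sᶜ \ T := by
      simp only [Finset.sdiff_eq_inter_compl, Finset.inter_comm]
    rw [subsetProb, hdiff, ← Finset.prod_sdiff hTS]
    ring
  rw [subsets_compl, Finset.sum_congr rfl split_compl, ← Finset.mul_sum, ← Finset.prod_add]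
  simp only [sub_add_cancel, Finset.prod_const_one, mul_one]

theorem sum_subsetProb_not_disjoint_and_disjoint (r : α → R) {F N : Finset α}
    (hFN : Disjoint F N) :
    ∑ S with ¬Disjoint S F ∧ Disjoint S N, subsetProb r S =
      (1 - ∏ a ∈ F, r a) * ∏ a ∈ N, r a := by
  have split := Finset.sum_filter_add_sum_filter_not
    ({S | Disjoint S N} : Finset (Finset α)) (Disjoint · F) (subsetProb r)
  simp only [Finset.filter_filter, and_comm (a := Disjoint _ N), ← Finset.disjoint_union_right,
    sum_subsetProb_disjoint, Finset.prod_union hFN] at split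
  linear_combination split

end RandomSubset

section FractionalColoring

variable {V : Type*} [Fintype V] {G : SimpleGraph V}

theorem fracChrom_le_totalWeight (f : FracColoring G) : fracChrom G ≤ totalWeight f := by
  refine csInf_le ⟨0, ?_⟩ ⟨f, rfl⟩
  rintro _ ⟨g, rfl⟩
  exact Finset.sum_nonneg fun A _ => g.nonneg A

/-- The fractional coloring given by a family of independent sets `I i`, possibly with repetitions,
carrying weights `p i`: a set receives the total weight of its occurrences in the family. -/
noncomputable def FracColoring.ofFamily {ι : Type*} [Fintype ι] {I : ι → Finset V}
    (hI : ∀ i, IsIndepF G (I i)) {p : ι → ℝ} (hp : ∀ i, 0 ≤ p i)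
    (hcover : ∀ v, 1 ≤ ∑ i with v ∈ I i, p i) : FracColoring G where
  x A := ∑ i with I i = A, p i
  nonneg _ := Finset.sum_nonneg fun i _ => hp i
  supp A hA := by
    obtain ⟨i, hi, -⟩ := Finset.exists_ne_zero_of_sum_ne_zero hA
    exact (Finset.mem_filter.mp hi).2 ▸ hI i
  cover v := by
    rw [← Finset.sum_filter, Finset.sum_fiberwise_eq_sum_filter]
    simpa only [Finset.mem_filter_univ] using hcover v

theorem FracColoring.totalWeight_ofFamily {ι : Type*} [Fintype ι] {I : ι → Finset V}
    (hI : ∀ i, IsIndepF G (I i)) {p : ι → ℝ} (hp : ∀ i, 0 ≤ p i)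
    (hcover : ∀ v, 1 ≤ ∑ i with v ∈ I i, p i) :
    totalWeight (ofFamily hI hp hcover) = ∑ i, p i :=
  Finset.sum_fiberwise _ _ _

theorem fracChrom_le_sum_div {ι : Type*} [Fintype ι] {I : ι → Finset V}
    (hI : ∀ i, IsIndepF G (I i)) {p : ι → ℝ} (hp : ∀ i, 0 ≤ p i) {c : ℝ} (hc : 0 < c)
    (hcover : ∀ v, c ≤ ∑ i with v ∈ I i, p i) : fracChrom G ≤ (∑ i, p i) / c := by
  have hp' (i : ι) : 0 ≤ p i / c := div_nonneg (hp i) hc.le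
  have hcover' (v : V) : 1 ≤ ∑ i with v ∈ I i, p i / c := by
    rw [← Finset.sum_div, one_le_div hc]
    exact hcover v
  calc fracChrom G ≤ totalWeight (FracColoring.ofFamily hI hp' hcover') :=
        fracChrom_le_totalWeight _
    _ = ∑ i, p i / c := FracColoring.totalWeight_ofFamily hI hp' hcover'
    _ = (∑ i, p i) / c := (Finset.sum_div _ _ _).symm

instance FracColoring.instNonempty : Nonempty (FracColoring G) :=
  ⟨ofFamily (I := fun v : V => {v}) (p := fun _ => 1) (by simp [IsIndepF])
    (fun _ => zero_le_one) (by simp [Finset.filter_eq])⟩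

end FractionalColoring

section LocalWeight

variable {V : Type*} [Fintype V] {D : V → V → Prop}

theorem sum_outNeighbors_le_localWeight_sub_one (f : FracColoring (underlying D)) (v : V) :
    ∑ A with ∃ u ∈ A, D v u, f.x A ≤ localWeight D f - 1 := by
  rw [localWeight, add_sub_cancel_left, Finset.sum_filter]
  exact le_ciSup (f := fun v => ∑ A : Finset V, if ∃ u ∈ A, D v u then f.x A else 0)
    (Set.finite_range _).bddAbove v

theorem one_le_localWeight (f : FracColoring (underlying D)) : 1 ≤ localWeight D f := by
  refine le_add_of_nonneg_right (Real.iSup_nonneg fun v => ?_)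
  rw [← Finset.sum_filter]
  exact Finset.sum_nonneg fun A _ => f.nonneg A

theorem two_le_localWeight (harc : ∃ u v, D u v) (f : FracColoring (underlying D)) :
    2 ≤ localWeight D f := by
  obtain ⟨u, v, huv⟩ := harc
  have hcover : 1 ≤ ∑ A with v ∈ A, f.x A := by
    rw [Finset.sum_filter]
    exact f.cover v
  have hmono : ∑ A with v ∈ A, f.x A ≤ ∑ A with ∃ w ∈ A, D u w, f.x A :=
    Finset.sum_le_sum_of_subset_of_nonneg
      (Finset.monotone_filter_right _ fun _ _ hv => ⟨v, hv, huv⟩) fun A _ _ => f.nonneg A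
  linarith [sum_outNeighbors_le_localWeight_sub_one f u]

theorem fracDirLocal_eq_iInf (D : V → V → Prop) :
    fracDirLocal D = ⨅ f : FracColoring (underlying D), localWeight D f := by
  simp only [fracDirLocal, iInf, Set.range, eq_comm]

theorem two_le_fracDirLocal (harc : ∃ u v, D u v) : 2 ≤ fracDirLocal D := by
  rw [fracDirLocal_eq_iInf]
  exact le_ciInf (two_le_localWeight harc)

end LocalWeight

section RandomIndependentSet

variable {V : Type*} [Fintype V] (D : V → V → Prop)

/-- The independent sets of the underlying graph of `D` that contain `v`. -/
noncomputable def indepSetsThrough (v : V) : Finset (Finset V) :=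
  {A | v ∈ A ∧ IsIndepF (underlying D) A}

/-- The sets of vertices that meet the out-neighborhood of `v`. Only out-neighbors other than `v`
count, so that a loop at `v` does not prevent `v` from being selected. -/
noncomputable def setsMeetingOut (v : V) : Finset (Finset V) :=
  {A | ∃ u ∈ A, u ≠ v ∧ D v u}

/-- The vertices selected by a family `S` of sets: those lying in an independent member of `S` and
having no out-neighbor in any member of `S`. -/
noncomputable def selectedVertices (S : Finset (Finset V)) : Finset V :=
  {v | ¬Disjoint S (indepSetsThrough D v) ∧ Disjoint S (setsMeetingOut D v)}

theorem isIndepF_selectedVertices (S : Finset (Finset V)) :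
    IsIndepF (underlying D) (selectedVertices D S) := by
  have not_arc {u v : V} (hu : u ∈ selectedVertices D S) (hv : v ∈ selectedVertices D S)
      (huv : u ≠ v) : ¬D u v := fun harc => by
    obtain ⟨B, hBS, hB⟩ := Finset.not_disjoint_iff.mp (Finset.mem_filter.mp hv).2.1
    have hvB : v ∈ B := (Finset.mem_filter.mp hB).2.1
    exact Finset.disjoint_left.mp (Finset.mem_filter.mp hu).2.2 hBS
      (Finset.mem_filter.mpr ⟨Finset.mem_univ B, v, hvB, huv.symm, harc⟩)
  rintro u hu v hv ⟨huv, harc | harc⟩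
  · exact not_arc hu hv huv harc
  · exact not_arc hv hu huv.symm harc

theorem disjoint_indepSetsThrough_setsMeetingOut (v : V) :
    Disjoint (indepSetsThrough D v) (setsMeetingOut D v) := by
  refine Finset.disjoint_left.mpr fun A hA hA' => ?_
  obtain ⟨hvA, hindep⟩ := (Finset.mem_filter.mp hA).2
  obtain ⟨u, huA, huv, harc⟩ := (Finset.mem_filter.mp hA').2
  exact hindep v hvA u huA ⟨huv.symm, Or.inl harc⟩

variable {D}

theorem one_le_sum_indepSetsThrough (f : FracColoring (underlying D)) (v : V) :
    1 ≤ ∑ A ∈ indepSetsThrough D v, f.x A := by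
  rw [indepSetsThrough, ← Finset.filter_filter,
    Finset.sum_filter_of_ne fun A _ hA => f.supp A hA, Finset.sum_filter]
  exact f.cover v

theorem sum_setsMeetingOut_le_localWeight_sub_one (f : FracColoring (underlying D)) (v : V) :
    ∑ A ∈ setsMeetingOut D v, f.x A ≤ localWeight D f - 1 :=
  (Finset.sum_le_sum_of_subset_of_nonneg
    (Finset.monotone_filter_right _ fun _ _ ⟨u, hu, _, harc⟩ => ⟨u, hu, harc⟩)
    fun A _ _ => f.nonneg A).trans (sum_outNeighbors_le_localWeight_sub_one f v)

theorem le_sum_subsetProb_mem_selectedVertices (f : FracColoring (underlying D)) {q : ℝ}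
    (hq₀ : 0 < q) (hq₁ : q ≤ 1) (v : V) :
    (1 - q) * q ^ (localWeight D f - 1) ≤
      ∑ S with v ∈ selectedVertices D S, subsetProb (fun A => q ^ f.x A) S := by
  have hcover : q ^ ∑ A ∈ indepSetsThrough D v, f.x A ≤ q :=
    Real.rpow_le_self_of_le_one hq₀.le hq₁ (one_le_sum_indepSetsThrough f v)
  have hlocal : q ^ (localWeight D f - 1) ≤ q ^ ∑ A ∈ setsMeetingOut D v, f.x A :=
    Real.rpow_le_rpow_of_exponent_ge hq₀ hq₁ (sum_setsMeetingOut_le_localWeight_sub_one f v)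
  calc (1 - q) * q ^ (localWeight D f - 1)
      ≤ (1 - q ^ ∑ A ∈ indepSetsThrough D v, f.x A) * q ^ ∑ A ∈ setsMeetingOut D v, f.x A := by
        gcongr
        linarith
    _ = ∑ S with ¬Disjoint S (indepSetsThrough D v) ∧ Disjoint S (setsMeetingOut D v),
          subsetProb (fun A => q ^ f.x A) S := by
        rw [sum_subsetProb_not_disjoint_and_disjoint _
          (disjoint_indepSetsThrough_setsMeetingOut D v),
          Real.rpow_sum_of_pos hq₀, Real.rpow_sum_of_pos hq₀]
    _ = _ := by simp only [selectedVertices, Finset.mem_filter_univ]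

theorem fracChrom_le_one_div_mul_rpow_localWeight (f : FracColoring (underlying D)) {q : ℝ}
    (hq₀ : 0 < q) (hq₁ : q < 1) :
    fracChrom (underlying D) ≤ 1 / ((1 - q) * q ^ (localWeight D f - 1)) := by
  have hprob : ∀ S, 0 ≤ subsetProb (fun A => q ^ f.x A) S :=
    subsetProb_nonneg (fun A => (Real.rpow_pos_of_pos hq₀ _).le)
      fun A => Real.rpow_le_one hq₀.le hq₁.le (f.nonneg A)
  have hpos : 0 < (1 - q) * q ^ (localWeight D f - 1) :=
    mul_pos (sub_pos.mpr hq₁) (Real.rpow_pos_of_pos hq₀ _)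
  simpa only [sum_subsetProb] using fracChrom_le_sum_div (isIndepF_selectedVertices D) hprob hpos
    (le_sum_subsetProb_mem_selectedVertices f hq₀ hq₁.le)

theorem fracChrom_le_one_div_mul_rpow_fracDirLocal (D : V → V → Prop) {q : ℝ} (hq₀ : 0 < q)
    (hq₁ : q < 1) :
    fracChrom (underlying D) ≤ 1 / ((1 - q) * q ^ (fracDirLocal D - 1)) := by
  have hpos (w : ℝ) : 0 < (1 - q) * q ^ (w - 1) :=
    mul_pos (sub_pos.mpr hq₁) (Real.rpow_pos_of_pos hq₀ _)
  have hmono : Monotone fun w : ℝ => 1 / ((1 - q) * q ^ (w - 1)) := fun w w' hw =>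
    one_div_le_one_div_of_le (hpos w') (mul_le_mul_of_nonneg_left
      (Real.rpow_le_rpow_of_exponent_ge hq₀ hq₁.le (sub_le_sub_right hw 1))
      (sub_nonneg.mpr hq₁.le))
  have hcont : Continuous fun w : ℝ => 1 / ((1 - q) * q ^ (w - 1)) :=
    continuous_const.div₀ (continuous_const.mul
      ((Real.continuous_const_rpow hq₀.ne').comp (continuous_sub_right 1))) fun w => (hpos w).ne'
  have hbdd : BddBelow (Set.range (localWeight D)) :=
    ⟨1, Set.forall_mem_range.mpr one_le_localWeight⟩
  rw [fracDirLocal_eq_iInf, hmono.map_ciInf_of_continuousAt hcont.continuousAt hbdd]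
  exact le_ciInf fun f => fracChrom_le_one_div_mul_rpow_localWeight f hq₀ hq₁

end RandomIndependentSet

theorem one_div_one_sub_mul_rpow_eq {k : ℝ} (hk : 1 < k) :
    1 / ((1 - (k - 1) / k) * ((k - 1) / k) ^ (k - 1)) = k ^ k / (k - 1) ^ (k - 1) := by
  have hk₀ : 0 < k := zero_lt_one.trans hk
  have hk₁ : 0 < k - 1 := sub_pos.mpr hk
  have hfactor : 1 - (k - 1) / k = 1 / k := by
    field_simp
    ring
  rw [hfactor, Real.div_rpow hk₁.le hk₀.le, Real.rpow_sub_one hk₀.ne']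
  field_simp

theorem stmt5_general {V : Type*} [Fintype V] (D : V → V → Prop) (harc : ∃ u v, D u v) :
    1 < fracDirLocal D ∧
      fracChrom (underlying D) ≤
        fracDirLocal D ^ fracDirLocal D / (fracDirLocal D - 1) ^ (fracDirLocal D - 1) := by
  have hk : 1 < fracDirLocal D := one_lt_two.trans_le (two_le_fracDirLocal harc)
  have hk₀ : 0 < fracDirLocal D := zero_lt_one.trans hk
  refine ⟨hk, ?_⟩
  rw [← one_div_one_sub_mul_rpow_eq hk]
  exact fracChrom_le_one_div_mul_rpow_fracDirLocal D (div_pos (sub_pos.mpr hk) hk₀)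
    ((div_lt_one hk₀).mpr (sub_one_lt _))

/-- For a finite loopless digraph `D` with at least one arc, `k = ψ_d*(D) > 1` and the
fractional chromatic number of the underlying graph is at most `k^k/(k-1)^(k-1)`
(real powers). -/
theorem stmt5 {V : Type} [Fintype V] (D : V → V → Prop)
    (hloop : ∀ v, ¬ D v v) (harc : ∃ u v, D u v) :
    1 < fracDirLocal D ∧
      fracChrom (underlying D) ≤
        fracDirLocal D ^ fracDirLocal D / (fracDirLocal D - 1) ^ (fracDirLocal D - 1) :=
  stmt5_general D harc
end

section
/- For every real number k ≥ 2 and every ε > 0 there exists a finite loopless directed graph G with ψ_d*(G) ≤ k and χ*(G) > k^k/(k−1)^{k−1} − ε, where χ*(G) denotes the fractional chromatic number of the underlying undirected graph. -/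
open Classical

/-!
Take as vertices all pairs `(x, a)` of disjoint subsets of `{1, …, m}` with `#x = r` and `#a = s`,
where `s / r ≈ k - 1`, and draw an arc `(x, a) → (y, b)` when `y ⊆ a`. Coloring `(x, a)` with the
`r` elements of `x` is an `r`-fold coloring in which the out-neighborhood of `(x, a)` sees only the
`s` colors in `a`, so `ψ_d* ≤ 1 + s / r`.

In an independent set no first component is contained in a second component. If the second
components fill a proportion `w ^ s` of all `s`-sets, Kruskal–Katona shows that their shadow fills
at least about a proportion `w ^ r` of the `r`-sets, and the first components avoid it. Hence an
independent set has density at most about `(1 - w ^ r) * w ^ s`, whose maximum is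
`p ^ p / (1 + p) ^ (1 + p)` with `p = s / r` by weighted AM-GM. The reciprocal of that density is a
lower bound for `χ*`.
-/

section

open Finset Filter Topology
open scoped FinsetFamily

section RealInequalities

/-- The value `k ^ k / (k - 1) ^ (k - 1)` approached by `χ*` under the constraint `ψ_d* ≤ k`. -/
noncomputable def chromBound (k : ℝ) : ℝ := k ^ k / (k - 1) ^ (k - 1)

lemma chromBound_pos {k : ℝ} (hk : 1 < k) : 0 < chromBound k := by
  have : 0 < k - 1 := sub_pos.2 hk
  unfold chromBound
  positivity

lemma continuousAt_chromBound {k : ℝ} (hk : 1 < k) : ContinuousAt chromBound k := by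
  have hk1 : 0 < k - 1 := sub_pos.2 hk
  refine ContinuousAt.div ?_ ?_ (by positivity)
  · exact continuousAt_id.rpow continuousAt_id (.inl (by positivity))
  · exact ContinuousAt.rpow (by fun_prop) (by fun_prop) (.inl hk1.ne')

lemma one_sub_mul_rpow_le_inv_chromBound {k q : ℝ} (hk : 1 < k) (hq0 : 0 ≤ q) (hq1 : q ≤ 1) :
    (1 - q) * q ^ (k - 1) ≤ (chromBound k)⁻¹ := by
  have hk0 : 0 < k := by linarith
  have hk1 : 0 < k - 1 := sub_pos.2 hk
  have hq : 0 ≤ 1 - q := sub_nonneg.2 hq1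
  have amgm : (1 - q) ^ (1 / k) * (q / (k - 1)) ^ ((k - 1) / k) ≤ 1 / k :=
    calc _ ≤ 1 / k * (1 - q) + (k - 1) / k * (q / (k - 1)) :=
          Real.geom_mean_le_arith_mean2_weighted (by positivity) (by positivity) hq
            (by positivity) (by field_simp; ring)
      _ = 1 / k := by field_simp; ring
  have amgm_pow : (1 - q) * (q / (k - 1)) ^ (k - 1) ≤ (1 / k) ^ k := by
    have h := Real.rpow_le_rpow (by positivity) amgm hk0.le
    rwa [Real.mul_rpow (by positivity) (by positivity), ← Real.rpow_mul hq,
      ← Real.rpow_mul (by positivity), div_mul_cancel₀ _ hk0.ne', div_mul_cancel₀ _ hk0.ne',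
      Real.rpow_one] at h
  calc (1 - q) * q ^ (k - 1) = (1 - q) * (q / (k - 1)) ^ (k - 1) * (k - 1) ^ (k - 1) := by
        rw [Real.div_rpow hq0 hk1.le]; field_simp
    _ ≤ (1 / k) ^ k * (k - 1) ^ (k - 1) := by gcongr
    _ = (chromBound k)⁻¹ := by
        rw [chromBound, inv_div, Real.div_rpow zero_le_one hk0.le, Real.one_rpow]; ring

lemma one_sub_pow_mul_pow_le_inv_chromBound {r s : ℕ} (hr : 0 < r) (hs : 0 < s) {w : ℝ}
    (hw0 : 0 ≤ w) (hw1 : w ≤ 1) :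
    (1 - w ^ r) * w ^ s ≤ (chromBound (1 + s / r))⁻¹ := by
  have hk : (1 : ℝ) < 1 + s / r := lt_add_of_pos_right _ (by positivity)
  have hws : (w ^ r) ^ ((1 + s / r : ℝ) - 1) = w ^ s := by
    rw [add_sub_cancel_left, ← Real.rpow_natCast_mul hw0, mul_div_cancel₀ _ (by positivity),
      Real.rpow_natCast]
  rw [← hws]
  exact one_sub_mul_rpow_le_inv_chromBound hk (by positivity) (pow_le_one₀ hw0 hw1)

lemma add_pow_sub_pow_le {x y d : ℝ} (hx : 0 ≤ x) (hxy : x ≤ y) (hd : 0 ≤ d) (n : ℕ) :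
    (x + d) ^ n - x ^ n ≤ (y + d) ^ n - y ^ n := by
  have hy : 0 ≤ y := hx.trans hxy
  rw [← geom_sum₂_mul, ← geom_sum₂_mul, add_sub_cancel_left, add_sub_cancel_left]
  gcongr

lemma one_sub_pow_mul_add_pow_le {r s : ℕ} (hr : 0 < r) (hs : 0 < s) {w d : ℝ}
    (hw0 : 0 ≤ w) (hw1 : w ≤ 1) (hd : 0 ≤ d) :
    (1 - w ^ r) * (w + d) ^ s ≤ (chromBound (1 + s / r))⁻¹ + ((1 + d) ^ s - 1) := by
  have hwr' : 1 - w ^ r ≤ 1 := sub_le_self _ (by positivity)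
  have hinc : (w + d) ^ s - w ^ s ≤ (1 + d) ^ s - 1 := by
    simpa using add_pow_sub_pow_le hw0 hw1 hd s
  have hinc0 : 0 ≤ (w + d) ^ s - w ^ s := sub_nonneg.2 (by gcongr; linarith)
  calc (1 - w ^ r) * (w + d) ^ s
      = (1 - w ^ r) * w ^ s + (1 - w ^ r) * ((w + d) ^ s - w ^ s) := by ring
    _ ≤ _ := add_le_add (one_sub_pow_mul_pow_le_inv_chromBound hr hs hw0 hw1)
        ((mul_le_of_le_one_left hinc0 hwr').trans hinc)

lemma exists_nat_div_lt_chromBound {k c : ℝ} (hk : 2 ≤ k) (hc : c < chromBound k) :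
    ∃ r s : ℕ, 0 < r ∧ r ≤ s ∧ (1 + s / r : ℝ) ≤ k ∧ c < chromBound (1 + s / r) := by
  have hk1 : 0 ≤ k - 1 := by linarith
  have hlim : Tendsto (fun r : ℕ ↦ 1 + (⌊(k - 1) * r⌋₊ : ℝ) / r) atTop (𝓝 k) := by
    simpa using ((tendsto_nat_floor_mul_div_atTop hk1).comp
      tendsto_natCast_atTop_atTop).const_add 1
  have hev := ((continuousAt_chromBound (by linarith)).tendsto.comp hlim).eventually_const_lt hc
  obtain ⟨r, hrc, hr⟩ := (hev.and (eventually_gt_atTop 0)).exists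
  have hr' : (0 : ℝ) < r := Nat.cast_pos.2 hr
  refine ⟨r, ⌊(k - 1) * r⌋₊, hr, Nat.le_floor ?_, ?_, hrc⟩
  · exact le_mul_of_one_le_left hr'.le (by linarith)
  · have := (div_le_iff₀ hr').2 (Nat.floor_le (mul_nonneg hk1 hr'.le))
    linarith

end RealInequalities

section Binomials

variable {r s m t : ℕ}

lemma choose_mul_pow_le_choose_mul_pow (r m t : ℕ) :
    m.choose r * (t + 1 - r) ^ r ≤ t.choose r * m ^ r := by
  refine Nat.le_of_mul_le_mul_left ?_ r.factorial_pos
  calc r.factorial * (m.choose r * (t + 1 - r) ^ r)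
      = m.descFactorial r * (t + 1 - r) ^ r := by
        rw [Nat.descFactorial_eq_factorial_mul_choose, mul_assoc]
    _ ≤ m ^ r * t.descFactorial r :=
        Nat.mul_le_mul (Nat.descFactorial_le_pow m r) (Nat.pow_sub_le_descFactorial t r)
    _ = r.factorial * (t.choose r * m ^ r) := by
        rw [Nat.descFactorial_eq_factorial_mul_choose]; ring

lemma div_pow_mul_choose_le_choose (hm : 0 < m) (r t : ℕ) :
    ((t + 1 - r : ℕ) / m : ℝ) ^ r * m.choose r ≤ t.choose r := by
  rw [div_pow, div_mul_eq_mul_div, div_le_iff₀ (by positivity), mul_comm]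
  exact_mod_cast choose_mul_pow_le_choose_mul_pow r m t

lemma choose_le_div_pow_mul_choose (hsm : s ≤ m) (t : ℕ) :
    (t.choose s : ℝ) ≤ (t / (m + 1 - s : ℕ)) ^ s * m.choose s := by
  have : 0 < m + 1 - s := by lia
  rw [div_pow, div_mul_eq_mul_div, le_div_iff₀ (by positivity), mul_comm (_ ^ s)]
  exact_mod_cast choose_mul_pow_le_choose_mul_pow s t m

lemma exists_choose_le_le_choose_succ {b : ℕ} (hb : 0 < b) (hsm : s ≤ m)
    (hbm : b ≤ m.choose s) :
    ∃ t, s ≤ t ∧ t ≤ m ∧ t.choose s ≤ b ∧ b ≤ (t + 1).choose s := by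
  have hs : s.choose s ≤ b := by rwa [Nat.choose_self]
  obtain ⟨t, ht⟩ : ∃ t, t = Nat.findGreatest (fun t ↦ t.choose s ≤ b) m := ⟨_, rfl⟩
  have htm : t ≤ m := ht ▸ Nat.findGreatest_le m
  refine ⟨t, ht ▸ Nat.le_findGreatest hsm hs, htm,
    ht ▸ Nat.findGreatest_spec (P := fun t ↦ t.choose s ≤ b) hsm hs, ?_⟩
  rcases htm.eq_or_lt with rfl | hlt
  · exact hbm.trans (Nat.choose_le_succ _ _)
  · exact (not_le.1 (Nat.findGreatest_is_greatest (P := fun t ↦ t.choose s ≤ b)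
      (ht ▸ t.lt_succ_self) hlt)).le

/-- An upper bound, for ground sets of size `m`, on the proportion of the disjoint pairs `(x, a)`
with `#x = r` and `#a = s` that an independent set can contain. Its limit as `m → ∞` is the
maximum of `(1 - w ^ r) * w ^ s` over `w ∈ [0, 1]`; the terms `r / m` and `1 - r - s` come from
comparing falling factorials with powers. -/
noncomputable def indepDensityBound (r s m : ℕ) : ℝ :=
  ((chromBound (1 + s / r))⁻¹ + ((1 + r / m) ^ s - 1)) * (m / (m + (1 - r - s))) ^ s

lemma indepDensityBound_pos (hr : 0 < r) (hs : 0 < s) (hm : r + s ≤ m) :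
    0 < indepDensityBound r s m := by
  have hm' : (r : ℝ) + s ≤ m := by exact_mod_cast hm
  have hm0 : (0 : ℝ) < m := by exact_mod_cast (by lia : 0 < m)
  have hden : (0 : ℝ) < m + (1 - r - s) := by linarith
  have hF : 0 < chromBound (1 + s / r) := chromBound_pos (lt_add_of_pos_right _ (by positivity))
  have hpow : (0 : ℝ) ≤ (1 + r / m) ^ s - 1 :=
    sub_nonneg.2 (one_le_pow₀ (le_add_of_nonneg_right (by positivity)))
  unfold indepDensityBound
  positivity

lemma tendsto_indepDensityBound (r s : ℕ) :
    Tendsto (indepDensityBound r s) atTop (𝓝 (chromBound (1 + s / r))⁻¹) := by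
  have hpow : Tendsto (fun m : ℕ ↦ (1 + (r : ℝ) / m) ^ s - 1) atTop (𝓝 0) := by
    simpa using (((tendsto_const_div_atTop_nhds_zero_nat (r : ℝ)).const_add 1).pow s).sub_const 1
  have hratio : Tendsto (fun m : ℕ ↦ ((m : ℝ) / (m + (1 - r - s))) ^ s) atTop (𝓝 1) := by
    simpa using (tendsto_natCast_div_add_atTop (1 - r - s : ℝ)).pow s
  unfold indepDensityBound
  simpa using (hpow.const_add (chromBound (1 + s / r))⁻¹).mul hratio

lemma choose_sub_choose_mul_choose_succ_le (hr : 0 < r) (hs : 0 < s) (hm : r + s ≤ m)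
    (ht : t ≤ m) :
    ((m.choose r : ℝ) - t.choose r) * (t + 1).choose s ≤
      indepDensityBound r s m * (m.choose r * (m - r).choose s) := by
  have hm0 : (0 : ℝ) < m := by exact_mod_cast (by lia : 0 < m)
  have hcast : ((m - r + 1 - s : ℕ) : ℝ) = m + (1 - r - s) := by
    push_cast [show s ≤ m - r + 1 by lia, show r ≤ m by lia]; ring
  have hden : (0 : ℝ) < m + (1 - r - s) := by
    rw [← hcast]; exact_mod_cast (by lia : 0 < m - r + 1 - s)
  obtain ⟨w, hw⟩ : ∃ w : ℝ, w = (t + 1 - r : ℕ) / m := ⟨_, rfl⟩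
  have hw0 : 0 ≤ w := by rw [hw]; positivity
  have hw1 : w ≤ 1 := by
    rw [hw, div_le_one hm0]; exact_mod_cast (by lia : t + 1 - r ≤ m)
  have hchoose_r : (m.choose r : ℝ) - t.choose r ≤ (1 - w ^ r) * m.choose r := by
    have := hw ▸ div_pow_mul_choose_le_choose (Nat.cast_pos.1 hm0) r t
    linarith
  have hshift : ((t + 1 : ℕ) : ℝ) ≤ (w + r / m) * m := by
    rw [hw, ← add_div, div_mul_cancel₀ _ hm0.ne']
    exact_mod_cast (by lia : t + 1 ≤ (t + 1 - r) + r)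
  have hchoose_s : ((t + 1).choose s : ℝ) ≤
      ((w + r / m) * (m / (m + (1 - r - s)))) ^ s * (m - r).choose s := by
    refine (choose_le_div_pow_mul_choose (by lia : s ≤ m - r) (t + 1)).trans ?_
    rw [hcast, mul_div_assoc']
    gcongr
  have hwr : 0 ≤ 1 - w ^ r := sub_nonneg.2 (pow_le_one₀ hw0 hw1)
  calc ((m.choose r : ℝ) - t.choose r) * (t + 1).choose s
      ≤ (1 - w ^ r) * m.choose r *
          (((w + r / m) * (m / (m + (1 - r - s)))) ^ s * (m - r).choose s) := by gcongr
    _ = (1 - w ^ r) * (w + r / m) ^ s *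
          ((m / (m + (1 - r - s))) ^ s * (m.choose r * (m - r).choose s)) := by rw [mul_pow]; ring
    _ ≤ ((chromBound (1 + s / r))⁻¹ + ((1 + r / m) ^ s - 1)) *
          ((m / (m + (1 - r - s))) ^ s * (m.choose r * (m - r).choose s)) := by
        gcongr
        exact one_sub_pow_mul_add_pow_le hr hs hw0 hw1 (by positivity)
    _ = indepDensityBound r s m * (m.choose r * (m - r).choose s) := by
        rw [indepDensityBound]; ring

end Binomials

section CrossFamilies

variable {r s m : ℕ} {𝒳 𝒜 : Finset (Finset (Fin m))}

lemma card_add_choose_le_choose_of_not_subset {t : ℕ} (hrs : r ≤ s) (hst : s ≤ t) (htm : t ≤ m)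
    (h𝒳 : (𝒳 : Set (Finset (Fin m))).Sized r) (h𝒜 : (𝒜 : Set (Finset (Fin m))).Sized s)
    (h : ∀ x ∈ 𝒳, ∀ a ∈ 𝒜, ¬ x ⊆ a) (ht : t.choose s ≤ #𝒜) :
    #𝒳 + t.choose r ≤ m.choose r := by
  have hshadow : t.choose r ≤ #(∂^[s - r] 𝒜) := by
    simpa [Nat.sub_sub_self hrs] using
      kruskal_katona_lovasz_form (i := s - r) (Nat.sub_le _ _) hst htm h𝒜 ht
  have hdisj : Disjoint 𝒳 (∂^[s - r] 𝒜) := disjoint_left.2 fun x hx hx' ↦ by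
    obtain ⟨a, ha, hxa, -⟩ := mem_shadow_iterate_iff_exists_sdiff.1 hx'
    exact h x hx a ha hxa
  have hsized : ((𝒳 ∪ ∂^[s - r] 𝒜 : Finset _) : Set (Finset (Fin m))).Sized r := by
    rw [coe_union, Set.sized_union]
    exact ⟨h𝒳, by simpa [Nat.sub_sub_self hrs] using h𝒜.shadow_iterate (k := s - r)⟩
  calc #𝒳 + t.choose r ≤ #𝒳 + #(∂^[s - r] 𝒜) := by gcongr
    _ = #(𝒳 ∪ ∂^[s - r] 𝒜) := (card_union_of_disjoint hdisj).symm
    _ ≤ m.choose r := by simpa using hsized.card_le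

lemma card_mul_card_le_of_not_subset (hr : 0 < r) (hrs : r ≤ s) (hm : r + s ≤ m)
    (h𝒳 : (𝒳 : Set (Finset (Fin m))).Sized r) (h𝒜 : (𝒜 : Set (Finset (Fin m))).Sized s)
    (h : ∀ x ∈ 𝒳, ∀ a ∈ 𝒜, ¬ x ⊆ a) :
    (#𝒳 * #𝒜 : ℝ) ≤ indepDensityBound r s m * (m.choose r * (m - r).choose s) := by
  have hs : 0 < s := hr.trans_le hrs
  rcases 𝒜.eq_empty_or_nonempty with rfl | hne
  · have := indepDensityBound_pos hr hs hm
    simp only [card_empty, Nat.cast_zero, mul_zero]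
    positivity
  obtain ⟨t, hst, htm, ht, ht'⟩ := exists_choose_le_le_choose_succ hne.card_pos
    (by lia : s ≤ m) (by simpa using h𝒜.card_le)
  have h𝒳t : (#𝒳 : ℝ) ≤ m.choose r - t.choose r := by
    rw [le_sub_iff_add_le]
    exact_mod_cast card_add_choose_le_choose_of_not_subset hrs hst htm h𝒳 h𝒜 h ht
  calc (#𝒳 * #𝒜 : ℝ) ≤ (m.choose r - t.choose r) * (t + 1).choose s :=
        mul_le_mul h𝒳t (by exact_mod_cast ht') (by positivity) ((Nat.cast_nonneg _).trans h𝒳t)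
    _ ≤ _ := choose_sub_choose_mul_choose_succ_le hr hs hm htm

end CrossFamilies

section Multicolorings

variable {V ι β : Type*} {G : SimpleGraph V} {D : V → V → Prop} {r s : ℕ} {c : V → Finset ι}

/-- An `r`-fold coloring of `G`: every vertex `v` receives a set `c v` of at least `r` colors, and
adjacent vertices receive disjoint sets. -/
structure IsMulticoloring (G : SimpleGraph V) (r : ℕ) (c : V → Finset ι) : Prop where
  le_card : ∀ v, r ≤ #(c v)
  disjoint : ∀ ⦃u v⦄, G.Adj u v → Disjoint (c u) (c v)

lemma isMulticoloring_singleton (G : SimpleGraph V) :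
    IsMulticoloring G 1 (fun v ↦ ({v} : Finset V)) where
  le_card v := (card_singleton v).ge
  disjoint _ _ huv := disjoint_singleton.2 huv.ne

/-- The set of vertices that receive the color `i` in a multicoloring `c`. -/
noncomputable def colorClass [Fintype V] (c : V → Finset ι) (i : ι) : Finset V := {v | i ∈ c v}

lemma mem_colorClass [Fintype V] {v : V} {i : ι} : v ∈ colorClass c i ↔ i ∈ c v := by
  simp [colorClass]

lemma IsMulticoloring.isIndepF_colorClass [Fintype V] (hc : IsMulticoloring G r c) (i : ι) :
    IsIndepF G (colorClass c i) := fun _ hu _ hv huv ↦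
  disjoint_left.1 (hc.disjoint huv) (mem_colorClass.1 hu) (mem_colorClass.1 hv)

lemma sum_ite_card_fiber_div [Fintype ι] [Fintype β] [DecidableEq β] (f : ι → β) (P : β → Prop)
    [DecidablePred P] (a : ℝ) :
    (∑ b, if P b then (#{i | f i = b} : ℝ) / a else 0) = #{i | P (f i)} / a := by
  rw [← sum_filter, ← sum_div, ← Nat.cast_sum, sum_card_fiberwise_eq_card_filter]
  simp only [mem_filter_univ]

/-- The fractional coloring induced by an `r`-fold coloring: each color class gets weight `1 / r`,
counted once for every color defining it. -/
noncomputable def FracColoring.ofMulticoloring [Fintype V] [Fintype ι] (hr : 0 < r)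
    (hc : IsMulticoloring G r c) : FracColoring G where
  x B := (#{i | colorClass c i = B} : ℝ) / r
  nonneg B := by positivity
  supp B hB := by
    obtain ⟨i, hi⟩ : ({i | colorClass c i = B} : Finset ι).Nonempty := by
      rw [nonempty_iff_ne_empty]
      rintro h
      simp [h] at hB
    rw [← (mem_filter.1 hi).2]
    exact hc.isIndepF_colorClass i
  cover v := by
    rw [sum_ite_card_fiber_div (colorClass c) (v ∈ ·), one_le_div (by positivity)]
    simpa [mem_colorClass] using hc.le_card v

lemma localWeight_nonneg [Fintype V] (f : FracColoring (underlying D)) : 0 ≤ localWeight D f :=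
  add_nonneg zero_le_one <| Real.iSup_nonneg fun _ ↦ sum_nonneg fun B _ ↦
    ite_nonneg (f.nonneg B) le_rfl

lemma fracDirLocal_le_one_add_div [Fintype V] [Finite ι] (hr : 0 < r)
    (hc : IsMulticoloring (underlying D) r c) {a : V → Finset ι} (ha : ∀ v, #(a v) ≤ s)
    (hD : ∀ v u, D v u → c u ⊆ a v) :
    fracDirLocal D ≤ 1 + s / r := by
  cases nonempty_fintype ι
  have hbdd : BddBelow {w : ℝ | ∃ f : FracColoring (underlying D), w = localWeight D f} :=
    ⟨0, by rintro _ ⟨f, rfl⟩; exact localWeight_nonneg f⟩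
  refine (csInf_le hbdd ⟨.ofMulticoloring hr hc, rfl⟩).trans ?_
  refine add_le_add_right (Real.iSup_le (fun v ↦ ?_) (by positivity)) 1
  refine (sum_ite_card_fiber_div (colorClass c) (fun B ↦ ∃ u ∈ B, D v u) (r : ℝ)).trans_le ?_
  gcongr
  refine (card_le_card fun i hi ↦ ?_).trans (ha v)
  obtain ⟨u, hui, huv⟩ := (mem_filter.1 hi).2
  exact hD v u huv (mem_colorClass.1 hui)

lemma card_le_totalWeight_mul [Fintype V] {a : ℝ} (ha : ∀ I, IsIndepF G I → #I ≤ a)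
    (f : FracColoring G) : Fintype.card V ≤ totalWeight f * a :=
  calc (Fintype.card V : ℝ) = ∑ _v : V, 1 := by simp
    _ ≤ ∑ v : V, ∑ B : Finset V, if v ∈ B then f.x B else 0 := sum_le_sum fun v _ ↦ f.cover v
    _ = ∑ B : Finset V, f.x B * #B := by
        rw [sum_comm]
        simp [mul_comm]
    _ ≤ ∑ B : Finset V, f.x B * a := sum_le_sum fun B _ ↦ by
        by_cases hB : f.x B = 0
        · simp [hB]
        · exact mul_le_mul_of_nonneg_left (ha B (f.supp B hB)) (f.nonneg B)
    _ = totalWeight f * a := (sum_mul ..).symm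

lemma card_div_le_fracChrom [Fintype V] {a : ℝ} (ha : ∀ I, IsIndepF G I → #I ≤ a) :
    Fintype.card V / a ≤ fracChrom G := by
  have ha0 : 0 ≤ a := by simpa using ha ∅ (by simp [IsIndepF])
  refine le_csInf ⟨_, .ofMulticoloring one_pos (isMulticoloring_singleton G), rfl⟩ ?_
  rintro _ ⟨f, rfl⟩
  exact div_le_of_le_mul₀ ha0 (sum_nonneg fun B _ ↦ f.nonneg B) (card_le_totalWeight_mul ha f)

end Multicolorings

section ContainmentDigraph

variable {V α : Type*} {r s m : ℕ}

/-- The pairs `(x, a)` of disjoint subsets of `α` with `#x = r` and `#a = s`. -/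
def disjointPairs (α : Type*) [Fintype α] [DecidableEq α] (r s : ℕ) :
    Finset (Finset α × Finset α) :=
  {p ∈ powersetCard r univ ×ˢ powersetCard s univ | Disjoint p.1 p.2}

lemma mem_disjointPairs [Fintype α] [DecidableEq α] {p : Finset α × Finset α} :
    p ∈ disjointPairs α r s ↔ (#p.1 = r ∧ #p.2 = s) ∧ Disjoint p.1 p.2 := by
  simp [disjointPairs]

lemma card_disjointPairs [Fintype α] [DecidableEq α] (r s : ℕ) :
    #(disjointPairs α r s) = (Fintype.card α).choose r * (Fintype.card α - r).choose s := by
  have hfiber : ∀ x ∈ powersetCard r (univ : Finset α),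
      #{a ∈ powersetCard s univ | Disjoint x a} = (Fintype.card α - r).choose s := by
    intro x hx
    have : ({a ∈ powersetCard s univ | Disjoint x a} : Finset (Finset α)) =
        powersetCard s xᶜ := by
      ext a
      simp [mem_powersetCard, subset_compl_iff_disjoint_left, and_comm]
    rw [this, card_powersetCard, card_compl, (mem_powersetCard.1 hx).2]
  simp only [disjointPairs, card_filter, sum_product]
  simp only [← card_filter, sum_congr rfl hfiber, sum_const, card_powersetCard, card_univ,
    smul_eq_mul]

/-- The digraph on a family `p v = (x, a)` of pairs of sets in which `v → u` whenever the first set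
of `u` is contained in the second set of `v`. The family is indexed so that the vertices can be
taken in `Fin n`. -/
def containmentDigraph (p : V → Finset α × Finset α) (v u : V) : Prop := (p u).1 ⊆ (p v).2

lemma not_containmentDigraph_self [Fintype α] [DecidableEq α] {p : V → Finset α × Finset α}
    (hp : ∀ v, p v ∈ disjointPairs α r s) (hr : 0 < r) (v : V) : ¬ containmentDigraph p v v := by
  intro hv
  obtain ⟨⟨hX, -⟩, hd⟩ := mem_disjointPairs.1 (hp v)
  have : (p v).1 = ∅ := disjoint_self_iff_empty _ |>.1 (hd.mono_right hv)
  simp [this] at hX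
  lia

lemma isMulticoloring_containmentDigraph [Fintype α] [DecidableEq α]
    {p : V → Finset α × Finset α} (hp : ∀ v, p v ∈ disjointPairs α r s) :
    IsMulticoloring (underlying (containmentDigraph p)) r (fun v ↦ (p v).1) where
  le_card v := (mem_disjointPairs.1 (hp v)).1.1.ge
  disjoint u v huv := by
    have hd v := (mem_disjointPairs.1 (hp v)).2
    rcases ((SimpleGraph.fromRel_adj _ _ _).1 huv).2 with h | h
    · exact (hd u).mono_right h
    · exact ((hd v).mono_right h).symm

lemma fracDirLocal_containmentDigraph_le [Fintype V] [Fintype α] [DecidableEq α]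
    {p : V → Finset α × Finset α} (hp : ∀ v, p v ∈ disjointPairs α r s) (hr : 0 < r) :
    fracDirLocal (containmentDigraph p) ≤ 1 + s / r :=
  fracDirLocal_le_one_add_div hr (isMulticoloring_containmentDigraph hp)
    (fun v ↦ (mem_disjointPairs.1 (hp v)).1.2.le) fun _ _ ↦ id

lemma card_le_of_isIndepF_containmentDigraph {p : V → Finset (Fin m) × Finset (Fin m)}
    (hp : ∀ v, p v ∈ disjointPairs (Fin m) r s) (hinj : p.Injective) (hr : 0 < r) (hrs : r ≤ s)
    (hm : r + s ≤ m) {I : Finset V} (hI : IsIndepF (underlying (containmentDigraph p)) I) :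
    #I ≤ indepDensityBound r s m * #(disjointPairs (Fin m) r s) := by
  have hcross : ∀ x ∈ I.image (fun v ↦ (p v).1), ∀ a ∈ I.image (fun v ↦ (p v).2), ¬ x ⊆ a := by
    simp only [forall_mem_image]
    intro u hu v hv huv
    rcases eq_or_ne v u with rfl | hne
    · exact not_containmentDigraph_self hp hr v huv
    · exact hI v hv u hu ((SimpleGraph.fromRel_adj _ _ _).2 ⟨hne, .inl huv⟩)
  have hsub : I.image p ⊆ I.image (fun v ↦ (p v).1) ×ˢ I.image (fun v ↦ (p v).2) :=
    image_subset_iff.2 fun v hv ↦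
      mem_product.2 ⟨mem_image_of_mem _ hv, mem_image_of_mem _ hv⟩
  calc (#I : ℝ) = #(I.image p) := by rw [card_image_of_injective _ hinj]
    _ ≤ #(I.image fun v ↦ (p v).1) * #(I.image fun v ↦ (p v).2) := by
        exact_mod_cast (card_le_card hsub).trans_eq (card_product _ _)
    _ ≤ indepDensityBound r s m * (m.choose r * (m - r).choose s) := by
        refine card_mul_card_le_of_not_subset hr hrs hm ?_ ?_ hcross
        · simpa [Set.Sized] using fun v _ ↦ (mem_disjointPairs.1 (hp v)).1.1
        · simpa [Set.Sized] using fun v _ ↦ (mem_disjointPairs.1 (hp v)).1.2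
    _ = indepDensityBound r s m * #(disjointPairs (Fin m) r s) := by
        rw [card_disjointPairs, Fintype.card_fin, Nat.cast_mul]

lemma inv_indepDensityBound_le_fracChrom [Fintype V] (e : V ≃ disjointPairs (Fin m) r s)
    (hr : 0 < r) (hrs : r ≤ s) (hm : r + s ≤ m) :
    (indepDensityBound r s m)⁻¹ ≤ fracChrom (underlying (containmentDigraph fun v ↦ (e v).1)) := by
  have hcard : Fintype.card V = #(disjointPairs (Fin m) r s) := by
    rw [Fintype.card_congr e, Fintype.card_coe]
  have hpos : #(disjointPairs (Fin m) r s) ≠ 0 := by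
    rw [card_disjointPairs, Fintype.card_fin]
    exact (Nat.mul_pos (Nat.choose_pos (by lia)) (Nat.choose_pos (by lia))).ne'
  have h := card_div_le_fracChrom fun I ↦ card_le_of_isIndepF_containmentDigraph (I := I)
    (fun v ↦ (e v).2) (Subtype.val_injective.comp e.injective) hr hrs hm
  rwa [hcard, div_mul_cancel_right₀ (Nat.cast_ne_zero.2 hpos)] at h

end ContainmentDigraph

end

/-- For every real `k ≥ 2` and `ε > 0` there is a finite loopless digraph `D` with
`ψ_d*(D) ≤ k` and `χ*` of the underlying graph exceeding `k^k/(k-1)^(k-1) - ε`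
(real powers). -/
theorem stmt7 (k : ℝ) (hk : 2 ≤ k) (ε : ℝ) (hε : 0 < ε) :
    ∃ (n : ℕ) (D : Fin n → Fin n → Prop),
      (∀ v, ¬ D v v) ∧ fracDirLocal D ≤ k ∧
      k ^ k / (k - 1) ^ (k - 1) - ε < fracChrom (underlying D) := by
  obtain ⟨r, s, hr, hrs, hsk, hlt⟩ := exists_nat_div_lt_chromBound hk (sub_lt_self _ hε)
  have hlim : Filter.Tendsto (fun m ↦ (indepDensityBound r s m)⁻¹) .atTop
      (nhds (chromBound (1 + s / r))) := by
    have hs : 0 < s := hr.trans_le hrs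
    have hk1 : (1 : ℝ) < 1 + s / r := lt_add_of_pos_right _ (by positivity)
    simpa using (tendsto_indepDensityBound r s).inv₀ (inv_ne_zero (chromBound_pos hk1).ne')
  obtain ⟨m, hχ, hm⟩ :=
    ((hlim.eventually_const_lt hlt).and (Filter.eventually_ge_atTop (r + s))).exists
  let e := (disjointPairs (Fin m) r s).equivFin.symm
  have he v : (e v).1 ∈ disjointPairs (Fin m) r s := (e v).2
  exact ⟨_, containmentDigraph fun v ↦ (e v).1, not_containmentDigraph_self he hr,
    (fracDirLocal_containmentDigraph_le he hr).trans hsk,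
    hχ.trans_le (inv_indepDensityBound_le_fracChrom e hr hrs hm)⟩
end
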